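/- arXiv:2108.01024 — 2 statements merged into one kernel-verified Lean document; each statement's English description precedes it below -/
import Mathlib

section
/- For every prime power q, the number of ordered 7-arcs in P^3(F_q) is C_{7,4}(q) = (q^2 + q + 1)(q^2 + 1)(q + 1)^2 (q − 1)^3 · q^6 · (q^6 − 28q^5 + 323q^4 − 1952q^3 + 6462q^2 − 11004q + 7470 − 30·a(q)), where a(q) = 1 if q is even and a(q) = 0 if q is odd. -/
open scoped LinearAlgebra.Projectivization

/-- Four points of `ℙ³(F_q)` are coplanar if vector representatives of them span a subspace
of `F_q^4` of dimension at most 3. -/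
def Coplanar4 (F : Type) [Field F] (x y z w : ℙ F (Fin 4 → F)) : Prop :=
  Module.finrank F
    ↥(x.submodule ⊔ y.submodule ⊔ z.submodule ⊔ w.submodule) ≤ 3

/-- An ordered `n`-arc in `ℙ³(F_q)`: an injective function from `{1,…,n}` to `ℙ³(F_q)`
such that no 4 of its points are coplanar. -/
def IsArc4 (F : Type) [Field F] {n : ℕ} (σ : Fin n → ℙ F (Fin 4 → F)) : Prop :=
  Function.Injective σ ∧
    ∀ a b c d : Fin n, a ≠ b → a ≠ c → a ≠ d → b ≠ c → b ≠ d → c ≠ d →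
      ¬ Coplanar4 F (σ a) (σ b) (σ c) (σ d)

/-!
Replacing points by representatives, an arc of seven points of `ℙ³` becomes a family of seven
vectors of `F ^ 4` any four of which are independent, up to scaling. Gale duality, which sends the
column space of a `7 × 4` matrix to its orthogonal complement, trades these for families of seven
vectors of `F ^ 3` any three of which are independent, that is, for arcs in a plane.

An arc of `n` points of the plane is extended by the points on none of its secants. If `e` is the
number of secants through a point, the sum of `(e - 1) (e - 2)` over the points off the arc depends
only on `n` and `q`, since any two secants meet in one point. Off an arc of at most seven points
`e ≤ 3`, so that this sum counts, twice, the points on no secant together with the points on three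
secants. The latter exist only for `n ≥ 6`, and for `n = 6` they are the points of concurrency of
the three lines of a syntheme, a partition of the arc into three pairs. Of the fifteen synthemes one
can be fixed by symmetry, and normalizing its concurrent lines leaves a count in coordinates, where
the parity of `q` enters through the coincidence of the excluded values `1` and `-1`.
-/

open Finset Module Submodule

section Arcs

variable {F V W ι κ : Type*} [Field F] [AddCommGroup V] [Module F V] [AddCommGroup W] [Module F W]
  {k : ℕ} {v : ι → V}

/-- Any `k` members of the family `v` are linearly independent. For `k = finrank F V` these are the
families of vectors representing arcs of the projective space of `V`. -/
def IsArc (F : Type*) [Field F] [Module F V] (k : ℕ) (v : ι → V) : Prop :=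
  ∀ s : Finset ι, #s = k → LinearIndepOn F v s

namespace IsArc

theorem linearIndepOn [Fintype ι] (hv : IsArc F k v) (hk : k ≤ Fintype.card ι) {s : Finset ι}
    (hs : #s ≤ k) : LinearIndepOn F v s := by
  obtain ⟨t, hst, ht⟩ := exists_superset_card_eq hs hk
  exact (hv t ht).mono (mod_cast hst)

theorem ne_zero [Fintype ι] (hv : IsArc F k v) (hk : k ≤ Fintype.card ι) (h1 : 1 ≤ k) (i : ι) :
    v i ≠ 0 :=
  (hv.linearIndepOn hk (s := {i}) (by simpa)).ne_zero (by simp)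

theorem comp_injective (hv : IsArc F k v) {f : κ → ι} (hf : f.Injective) : IsArc F k (v ∘ f) := by
  classical
  intro s hs
  refine .comp_of_image ?_ hf.injOn
  rw [← coe_image]
  exact hv _ (by rw [card_image_of_injective _ hf, hs])

theorem injective [Fintype ι] (hv : IsArc F k v) (hk : k ≤ Fintype.card ι) (h2 : 2 ≤ k) :
    v.Injective := by
  classical
  intro i j hij
  exact (hv.linearIndepOn hk (card_le_two.trans h2 : #{i, j} ≤ k)).injOn (by simp) (by simp) hij

theorem finrank_span_image [Fintype ι] (hv : IsArc F k v) (hk : k ≤ Fintype.card ι) {s : Finset ι}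
    (hs : #s ≤ k) : finrank F (span F (v '' s)) = #s := by
  rw [Set.image_eq_range, finrank_span_eq_card (hv.linearIndepOn hk hs).linearIndependent]
  simp

theorem span_image_eq_top [FiniteDimensional F V] (hv : IsArc F (finrank F V) v) {s : Finset ι}
    (hs : finrank F V ≤ #s) : span F (v '' s) = ⊤ := by
  obtain ⟨t, hts, ht⟩ := exists_subset_card_eq hs
  rw [eq_top_iff, ← (hv t ht).linearIndependent.span_eq_top_of_card_eq_finrank' (by simpa using ht),
    Set.image_eq_range]
  exact span_mono (by rintro - ⟨i, rfl⟩; exact ⟨⟨i, hts i.2⟩, rfl⟩)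

theorem span_range_eq_top [FiniteDimensional F V] [Fintype ι] (hv : IsArc F (finrank F V) v)
    (hι : finrank F V ≤ Fintype.card ι) : span F (Set.range v) = ⊤ := by
  simpa using hv.span_image_eq_top (s := univ) (by simpa)

end IsArc

theorem isArc_comp_equiv (e : κ ≃ ι) : IsArc F k (v ∘ e) ↔ IsArc F k v :=
  ⟨fun h ↦ by simpa [Function.comp_assoc] using h.comp_injective e.symm.injective,
    fun h ↦ h.comp_injective e.injective⟩

theorem isArc_units_smul (c : ι → Fˣ) : IsArc F k (fun i ↦ c i • v i) ↔ IsArc F k v := by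
  have smul {w : ι → V} (c : ι → Fˣ) (hw : IsArc F k w) : IsArc F k (fun i ↦ c i • w i) :=
    fun s hs ↦ (hw s hs).units_smul (fun i ↦ c i)
  exact ⟨fun h ↦ by simpa using smul c⁻¹ h, smul c⟩

theorem isArc_linearMap_comp {f : V →ₗ[F] W} (hf : Function.Injective f) :
    IsArc F k (f ∘ v) ↔ IsArc F k v :=
  forall₂_congr fun _ _ ↦ f.linearIndepOn_iff_of_injOn hf.injOn

theorem isArc_iff_forall_injective :
    IsArc F k v ↔ ∀ f : Fin k → ι, f.Injective → LinearIndependent F (v ∘ f) := by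
  classical
  constructor
  · intro hv f hf
    rw [← linearIndepOn_range_iff hf, ← Set.image_univ, ← coe_univ, ← coe_image]
    exact hv _ (by simp [card_image_of_injective _ hf])
  · intro h s hs
    let e := s.equivFinOfCardEq hs
    have := h (fun i ↦ e.symm i) (Subtype.val_injective.comp e.symm.injective)
    exact (linearIndependent_equiv e.symm).1 this

theorem isArc_iff_forall_orderEmbedding [LinearOrder ι] :
    IsArc F k v ↔ ∀ f : Fin k ↪o ι, LinearIndependent F (v ∘ f) := by
  refine ⟨fun hv f ↦ isArc_iff_forall_injective.1 hv f f.injective, fun h s hs ↦ ?_⟩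
  rw [← s.range_orderEmbOfFin hs, linearIndepOn_range_iff (s.orderEmbOfFin hs).injective]
  exact h _

theorem isArc_iff_linearIndependent [Fintype ι] (hk : Fintype.card ι = k) :
    IsArc F k v ↔ LinearIndependent F v := by
  refine ⟨fun hv ↦ ?_, fun h s _ ↦ h.linearIndepOn _⟩
  simpa [linearIndepOn_univ_iff] using hv univ (by simpa)

open scoped Classical in
/-- The finite set of all arcs indexed by `ι` in `V`. -/
noncomputable def arcs (F : Type*) (k : ℕ) (ι V : Type*) [Field F] [AddCommGroup V] [Module F V]
    [Fintype ι] [Fintype V] : Finset (ι → V) :=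
  {v | IsArc F k v}

@[simp]
theorem mem_arcs [Fintype ι] [Fintype V] : v ∈ arcs F k ι V ↔ IsArc F k v := by
  simp [arcs]

end Arcs

section Projective

theorem not_coplanar4_iff {F : Type} [Field F] {x y z w : ℙ F (Fin 4 → F)} :
    ¬Coplanar4 F x y z w ↔ LinearIndependent F ![x.rep, y.rep, z.rep, w.rep] := by
  have h_span : x.submodule ⊔ y.submodule ⊔ z.submodule ⊔ w.submodule
      = span F (Set.range ![x.rep, y.rep, z.rep, w.rep]) := by
    simp only [Projectivization.submodule_eq, ← span_union]
    congr 1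
    ext
    simp
  rw [linearIndependent_iff_card_le_finrank_span, Coplanar4, h_span, Set.finrank,
    Fintype.card_fin]
  omega

theorem isArc4_iff_isArc {F : Type} [Field F] {n : ℕ} (hn : 4 ≤ n) {σ : Fin n → ℙ F (Fin 4 → F)} :
    IsArc4 F σ ↔ IsArc F 4 (fun i ↦ (σ i).rep) := by
  constructor
  · intro hσ
    refine isArc_iff_forall_injective.2 fun f hf ↦ ?_
    have h_vec : (fun i ↦ (σ i).rep) ∘ f
        = ![(σ (f 0)).rep, (σ (f 1)).rep, (σ (f 2)).rep, (σ (f 3)).rep] := by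
      ext i : 1
      fin_cases i <;> rfl
    rw [h_vec]
    exact not_coplanar4_iff.1 (hσ.2 _ _ _ _ (hf.ne (by decide)) (hf.ne (by decide))
      (hf.ne (by decide)) (hf.ne (by decide)) (hf.ne (by decide)) (hf.ne (by decide)))
  · intro hσ
    refine ⟨(hσ.injective (by simpa) (by simp)).of_comp (f := Projectivization.rep), ?_⟩
    intro a b c d hab hac had hbc hbd hcd
    rw [not_coplanar4_iff]
    have h_inj : Function.Injective ![a, b, c, d] := by
      simp [Function.Injective, Fin.forall_fin_succ, *, Ne.symm]
    have h_vec : (fun i ↦ (σ i).rep) ∘ ![a, b, c, d]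
        = ![(σ a).rep, (σ b).rep, (σ c).rep, (σ d).rep] := by
      ext i : 1
      fin_cases i <;> rfl
    rw [← h_vec]
    exact isArc_iff_forall_injective.1 hσ _ h_inj

variable {F V ι : Type*} [Field F] [AddCommGroup V] [Module F V] [Fintype ι] {k : ℕ}

theorem card_projective_arcs_mul [Fintype F] [Fintype V] (hk : k ≤ Fintype.card ι) (h1 : 1 ≤ k) :
    Nat.card {σ : ι → ℙ F V // IsArc F k fun i ↦ (σ i).rep} *
      (Fintype.card F - 1) ^ Fintype.card ι = #(arcs F k ι V) := by
  classical
  have h_scalars : (Fintype.card F - 1) ^ Fintype.card ι = Nat.card (ι → Fˣ) := by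
    simp [Nat.card_eq_fintype_card, Fintype.card_units]
  have h_arcs : #(arcs F k ι V) = Nat.card {v : ι → V // IsArc F k v} :=
    (Nat.subtype_card _ fun _ ↦ mem_arcs).symm
  rw [h_scalars, h_arcs, ← Nat.card_prod]
  refine Nat.card_eq_of_bijective (fun p ↦ ⟨fun i ↦ p.2 i • (p.1.1 i).rep,
    (isArc_units_smul _).2 p.1.2⟩) ⟨?_, ?_⟩
  · rintro ⟨⟨σ, hσ⟩, c⟩ ⟨⟨τ, hτ⟩, d⟩ h
    have h_eq (i : ι) : c i • (σ i).rep = d i • (τ i).rep := congrFun (Subtype.ext_iff.1 h) i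
    obtain rfl : σ = τ := by
      ext i
      rw [← (σ i).mk_rep, ← (τ i).mk_rep, Projectivization.mk_eq_mk_iff]
      exact ⟨(c i)⁻¹ * d i, by rw [mul_smul, ← h_eq, inv_smul_smul]⟩
    obtain rfl : c = d := by
      ext i
      exact smul_left_injective F (σ i).rep_nonzero (h_eq i)
    rfl
  · rintro ⟨v, hv⟩
    choose c hc using fun i ↦ Projectivization.exists_smul_eq_mk_rep F (v i) (hv.ne_zero hk h1 i)
    refine ⟨⟨⟨fun i ↦ .mk F (v i) (hv.ne_zero hk h1 i), ?_⟩, c⁻¹⟩, ?_⟩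
    · simp only [← hc]
      exact (isArc_units_smul c).2 hv
    · simp [← hc]

end Projective

section GaleDuality

open scoped Matrix

theorem linearIndependent_col_iff_rank_eq {F ι : Type*} [Field F] {m : ℕ} {w : Matrix ι (Fin m) F} :
    LinearIndependent F w.col ↔ w.rank = m := by
  rw [linearIndependent_iff_card_eq_finrank_span, Fintype.card_fin,
    Matrix.rank_eq_finrank_span_cols, Set.finrank, eq_comm]

variable {F ι : Type*} [Field F] [Fintype ι] {k m : ℕ}
  {v : Matrix ι (Fin k) F} {w : Matrix ι (Fin m) F}

theorem IsArc.rank_eq (hv : IsArc F k v.row) (hk : k ≤ Fintype.card ι) : v.rank = k := by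
  rw [Matrix.rank_eq_finrank_span_row, IsArc.span_range_eq_top (by simpa) (by simpa), finrank_top,
    finrank_fin_fun]

/-- If `w *ᵥ x` vanishes on `m` of the indices, it is a relation between the `k` remaining vectors
of the arc `v`, hence `x = 0`. -/
theorem isArc_row_of_transpose_mul_eq_zero (hι : Fintype.card ι = k + m) (hv : IsArc F k v.row)
    (hw : LinearIndependent F w.col) (hvw : vᵀ * w = 0) : IsArc F m w.row := by
  classical
  intro s hs
  let w' : Matrix s (Fin m) F := w.submatrix (↑) id
  have h_col : LinearIndependent F w'.col := by
    rw [← Matrix.mulVec_injective_iff, ← Matrix.coe_mulVecLin, ← LinearMap.ker_eq_bot,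
      LinearMap.ker_eq_bot']
    intro x hx
    have h_relation : ∑ i, (w *ᵥ x) i • v.row i = 0 := by
      rw [← Matrix.zero_mulVec x, ← hvw, ← Matrix.mulVec_mulVec, Matrix.mulVec_transpose,
        Matrix.vecMul_eq_sum]
      rfl
    have h_zero (i : ι) (hi : i ∈ s) : (w *ᵥ x) i = 0 := congrFun hx ⟨i, hi⟩
    have h_zero' : ∀ i ∈ sᶜ, (w *ᵥ x) i = 0 := by
      refine linearIndepOn_finset_iff.1 (hv sᶜ (by rw [card_compl]; omega)) _ ?_
      rw [← h_relation, ← sum_compl_add_sum s, left_eq_add]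
      exact sum_eq_zero fun i hi ↦ by rw [h_zero i hi, zero_smul]
    refine Matrix.mulVec_injective_iff.2 hw ?_
    ext i
    by_cases hi : i ∈ s
    · simp [h_zero i hi]
    · simp [h_zero' i (by simpa)]
  have h_row : LinearIndependent F w'.row := by
    rw [linearIndependent_iff_card_eq_finrank_span, Set.finrank, ← Matrix.rank_eq_finrank_span_row,
      linearIndependent_col_iff_rank_eq.1 h_col, Fintype.card_coe, hs]
  exact h_row

theorem isArc_row_iff_linearIndependent_col (hι : Fintype.card ι = k + m) (hv : IsArc F k v.row)
    (hvw : vᵀ * w = 0) : IsArc F m w.row ↔ LinearIndependent F w.col :=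
  ⟨fun hw ↦ linearIndependent_col_iff_rank_eq.2 (hw.rank_eq (by omega)),
    fun hw ↦ isArc_row_of_transpose_mul_eq_zero hι hv hw hvw⟩

theorem finrank_ker_transpose (hι : Fintype.card ι = k + m) (hv : IsArc F k v.row) :
    finrank F (LinearMap.ker vᵀ.mulVecLin) = m := by
  have h_rank : finrank F (LinearMap.range vᵀ.mulVecLin) = k :=
    (Matrix.rank_transpose v).trans (hv.rank_eq (by omega))
  have := vᵀ.mulVecLin.finrank_range_add_finrank_ker
  rw [finrank_fintype_fun_eq_card] at this
  omega

open scoped Classical in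
theorem card_arcs_filter_transpose_mul_eq_zero [Fintype F] (hι : Fintype.card ι = k + m)
    (hv : IsArc F k v.row) :
    #{w ∈ arcs F m ι (Fin m → F) | vᵀ * Matrix.of w = 0} = #(arcs F m (Fin m) (Fin m → F)) := by
  let e : (Fin m → F) ≃ₗ[F] LinearMap.ker vᵀ.mulVecLin :=
    LinearEquiv.ofFinrankEq _ _ (by simp [finrank_ker_transpose hι hv])
  let φ : (Fin m → F) →ₗ[F] (ι → F) := (LinearMap.ker vᵀ.mulVecLin).subtype ∘ₗ e
  have hφ : Function.Injective φ := Subtype.val_injective.comp e.injective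
  symm
  have h_mul (G : Fin m → Fin m → F) : vᵀ * (Matrix.of fun i j ↦ φ (G j) i) = 0 := by
    ext a j
    exact congrFun (e (G j)).2 a
  refine card_bij (fun G _ i j ↦ φ (G j) i) (fun G hG ↦ ?_) (fun G _ G' _ h ↦ ?_) (fun w hw ↦ ?_)
  · rw [mem_arcs, isArc_iff_linearIndependent (Fintype.card_fin m)] at hG
    refine mem_filter.2 ⟨mem_arcs.2 ?_, h_mul G⟩
    exact (isArc_row_iff_linearIndependent_col hι hv (h_mul G)).2
      (hG.map' φ (LinearMap.ker_eq_bot.2 hφ))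
  · ext1 j
    exact hφ (funext fun i ↦ congrFun (congrFun h i) j)
  · obtain ⟨hw, hvw⟩ := mem_filter.1 hw
    let c (j : Fin m) : LinearMap.ker vᵀ.mulVecLin :=
      ⟨fun i ↦ w i j, funext fun a ↦ congrFun (congrFun hvw a) j⟩
    have h_col : φ ∘ (fun j ↦ e.symm (c j)) = Matrix.col w := by
      ext j i
      exact congrFun (congrArg Subtype.val (e.apply_symm_apply (c j))) i
    refine ⟨fun j ↦ e.symm (c j), ?_, ?_⟩
    · rw [mem_arcs, isArc_iff_linearIndependent (Fintype.card_fin m)]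
      refine LinearIndependent.of_comp φ ?_
      rw [h_col]
      exact (isArc_row_iff_linearIndependent_col hι hv hvw).1 (mem_arcs.1 hw)
    · ext i j
      exact congrFun (congrFun h_col j) i

theorem card_arcs_mul_card_frames [Fintype F] (hι : Fintype.card ι = k + m) :
    #(arcs F k ι (Fin k → F)) * #(arcs F m (Fin m) (Fin m → F)) =
      #(arcs F m ι (Fin m → F)) * #(arcs F k (Fin k) (Fin k → F)) := by
  classical
  refine card_mul_eq_card_mul (fun v w ↦ (Matrix.of v)ᵀ * Matrix.of w = 0) (fun v hv ↦ ?_)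
    (fun w hw ↦ ?_)
  · rw [bipartiteAbove, ← card_arcs_filter_transpose_mul_eq_zero (v := v) hι (mem_arcs.1 hv)]
    congr! 2
  · rw [bipartiteBelow, ← card_arcs_filter_transpose_mul_eq_zero (v := w) (hι.trans (add_comm k m))
      (mem_arcs.1 hw)]
    congr! 2 with v
    rw [← Matrix.transpose_eq_zero, Matrix.transpose_mul, Matrix.transpose_transpose]
    rfl

end GaleDuality

section Secants

theorem span_image_inf_span_image {R M ι : Type*} [Semiring R] [AddCommMonoid M] [Module R M]
    {v : ι → M} {s t : Set ι} (h : LinearIndepOn R v (s ∪ t)) :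
    span R (v '' s) ⊓ span R (v '' t) = span R (v '' (s ∩ t)) := by
  refine le_antisymm (fun x hx ↦ ?_)
    (le_inf (span_mono (by gcongr; simp)) (span_mono (by gcongr; simp)))
  obtain ⟨⟨f, hf, rfl⟩, ⟨g, hg, hgf⟩⟩ :=
    hx.imp (Finsupp.mem_span_image_iff_linearCombination R).1
      (Finsupp.mem_span_image_iff_linearCombination R).1
  obtain rfl : g = f := linearIndepOn_iffₛ.1 h g (Finsupp.supported_mono (by simp) hg) f
    (Finsupp.supported_mono (by simp) hf) hgf
  refine (Finsupp.mem_span_image_iff_linearCombination R).2 ⟨g, ?_, rfl⟩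
  rw [Finsupp.supported_inter]
  exact ⟨hf, hg⟩

theorem IsArc.mem_span_image_inter {F V ι : Type*} [Field F] [AddCommGroup V] [Module F V]
    [Fintype ι] [DecidableEq ι] {v : ι → V} {R : V} {k : ℕ} (hv : IsArc F k v)
    (hι : k ≤ Fintype.card ι) {s t : Finset ι} (hst : #(s ∪ t) ≤ k) (hs : R ∈ span F (v '' s))
    (ht : R ∈ span F (v '' t)) :
    R ∈ span F (v '' ↑(s ∩ t)) := by
  have h := hv.linearIndepOn hι hst
  rw [coe_union] at h
  rw [coe_inter, ← span_image_inf_span_image h]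
  exact ⟨hs, ht⟩

open scoped Classical in
theorem card_pairs_containing {ι : Type*} [Fintype ι] (a : ι) :
    #{s ∈ powersetCard 2 (univ : Finset ι) | a ∈ s} = Fintype.card ι - 1 := by
  rw [← card_univ, ← card_erase_of_mem (mem_univ a)]
  symm
  refine card_bij (fun b _ ↦ {a, b}) (fun b hb ↦ ?_) (fun b hb c _ h ↦ ?_) fun s hs ↦ ?_
  · simp [card_pair (ne_of_mem_erase hb).symm]
  · have : b ∈ ({a, c} : Finset ι) := h ▸ by simp
    grind
  · obtain ⟨b, c, hbc, rfl⟩ := card_eq_two.1 (mem_powersetCard.1 (mem_filter.1 hs).1).2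
    obtain rfl | rfl : a = b ∨ a = c := by simpa using (mem_filter.1 hs).2
    · exact ⟨c, by simp [hbc.symm], rfl⟩
    · exact ⟨b, by simp [hbc], pair_comm _ _⟩

variable {F V ι : Type*} [Field F] [AddCommGroup V] [Module F V] [Fintype ι]

open scoped Classical in
/-- The pairs of members of the family `v` whose span contains `R`: for an arc these are the
secants through the point represented by `R`. -/
noncomputable def secantsThrough (F : Type*) [Field F] [Module F V] (v : ι → V) (R : V) :
    Finset (Finset ι) :=
  {s ∈ powersetCard 2 univ | R ∈ span F (v '' s)}

open scoped Classical in
/-- The vectors representing points different from those of the arc `v`. -/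
noncomputable def offArc (F : Type*) [Field F] [Module F V] [Fintype V] (v : ι → V) : Finset V :=
  {R | ∀ i, R ∉ F ∙ v i}

variable {v : ι → V} {R : V}

theorem mem_secantsThrough {s : Finset ι} :
    s ∈ secantsThrough F v R ↔ #s = 2 ∧ R ∈ span F (v '' s) := by
  simp [secantsThrough]

theorem mem_offArc [Fintype V] : R ∈ offArc F v ↔ ∀ i, R ∉ F ∙ v i := by
  simp [offArc]

theorem ne_zero_of_mem_offArc [Fintype V] [Nonempty ι] (hR : R ∈ offArc F v) : R ≠ 0 := by
  rintro rfl
  exact mem_offArc.1 hR (Classical.arbitrary ι) (zero_mem _)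

open scoped Classical in
theorem card_filter_ne_zero_mem [Fintype F] [Fintype V] (W : Submodule F V) :
    (#{R | R ≠ 0 ∧ R ∈ W} : ℤ) = (Fintype.card F : ℤ) ^ finrank F W - 1 := by
  have h_card : #{R | R ∈ W} = Fintype.card F ^ finrank F W := by
    rw [← Module.card_eq_pow_finrank (V := W), Fintype.card_subtype]
  have h_insert : ({R | R ∈ W} : Finset V) = insert 0 ({R | R ≠ 0 ∧ R ∈ W} : Finset V) := by
    ext R
    by_cases hR : R = 0 <;> simp [hR]
  rw [h_insert, card_insert_of_notMem (by simp)] at h_card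
  exact eq_sub_of_add_eq (mod_cast h_card)

open scoped Classical in
theorem sum_card_filter_mem [Fintype F] [Fintype V] {β : Type*} (T : Finset β)
    (W : β → Submodule F V) :
    (∑ R with R ≠ 0, #{t ∈ T | R ∈ W t} : ℤ) =
      ∑ t ∈ T, ((Fintype.card F : ℤ) ^ finrank F (W t) - 1) := by
  simp only [← card_filter_ne_zero_mem, ← filter_filter]
  exact mod_cast sum_card_bipartiteAbove_eq_sum_card_bipartiteBelow (fun R t ↦ R ∈ W t)

namespace IsArc

variable (hv : IsArc F 3 v) (hι : 3 ≤ Fintype.card ι)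
include hv hι

theorem mem_secantsThrough_iff_of_mem_span_singleton {a : ι} (hR : R ≠ 0) (ha : R ∈ F ∙ v a)
    {s : Finset ι} : s ∈ secantsThrough F v R ↔ #s = 2 ∧ a ∈ s := by
  classical
  rw [mem_secantsThrough]
  refine and_congr_right fun hs ↦ ⟨fun hRs ↦ ?_, fun has ↦ ?_⟩
  · by_contra has
    have h_inter := hv.mem_span_image_inter hι (s := {a}) (t := s)
      (by grw [card_union_le]; simp [hs]) (by simpa) hRs
    simp [singleton_inter_of_notMem has, hR] at h_inter
  · exact span_mono (by simpa using ⟨a, has, rfl⟩) ha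

theorem card_secantsThrough_of_mem_span_singleton {a : ι} (hR : R ≠ 0) (ha : R ∈ F ∙ v a) :
    #(secantsThrough F v R) = Fintype.card ι - 1 := by
  rw [← card_pairs_containing a]
  congr 1
  ext s
  simp [hv.mem_secantsThrough_iff_of_mem_span_singleton hι hR ha]

theorem disjoint_of_mem_secantsThrough [Fintype V] (hR : R ∈ offArc F v) {s t : Finset ι}
    (hs : s ∈ secantsThrough F v R) (ht : t ∈ secantsThrough F v R) (hst : s ≠ t) :
    Disjoint s t := by
  classical
  rw [mem_secantsThrough] at hs ht
  by_contra h_meet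
  obtain ⟨a, ha⟩ := not_disjoint_iff_nonempty_inter.1 h_meet
  have h_inter : s ∩ t = {a} := by
    refine eq_singleton_iff_unique_mem.2 ⟨ha, fun b hb ↦ by_contra fun hba ↦ hst ?_⟩
    have h2 : 2 ≤ #(s ∩ t) := one_lt_card.2 ⟨b, hb, a, ha, hba⟩
    rw [← eq_of_subset_of_card_le inter_subset_left (hs.1.trans_le h2),
      eq_of_subset_of_card_le inter_subset_right (ht.1.trans_le h2)]
  have h_union : #(s ∪ t) ≤ 3 := by
    have := card_union_add_card_inter s t
    rw [h_inter, card_singleton] at this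
    omega
  have := hv.mem_span_image_inter hι h_union hs.2 ht.2
  exact mem_offArc.1 hR a (by simpa [h_inter] using this)

theorem two_mul_card_secantsThrough_le [Fintype V] (hR : R ∈ offArc F v) :
    2 * #(secantsThrough F v R) ≤ Fintype.card ι := by
  classical
  calc 2 * #(secantsThrough F v R) = ∑ s ∈ secantsThrough F v R, #s := by
        rw [sum_congr rfl fun s hs ↦ (mem_secantsThrough.1 hs).1, sum_const, smul_eq_mul, mul_comm]
    _ = #((secantsThrough F v R).biUnion id) := by
        rw [card_biUnion]
        · rfl
        · exact fun s hs t ht ↦ hv.disjoint_of_mem_secantsThrough hι hR hs ht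
    _ ≤ Fintype.card ι := card_le_univ _

theorem finrank_secant_inf_secant [FiniteDimensional F V] (hV : finrank F V = 3) {s t : Finset ι}
    (hs : #s = 2) (ht : #t = 2) (hst : s ≠ t) :
    finrank F ↥(span F (v '' s) ⊓ span F (v '' t)) = 1 := by
  classical
  have h_sup : span F (v '' s) ⊔ span F (v '' t) = ⊤ := by
    rw [← span_union, ← Set.image_union, ← coe_union]
    refine IsArc.span_image_eq_top (hV ▸ hv) ?_
    have : #s < #(s ∪ t) := card_lt_card <| left_lt_sup.2 fun hts ↦
      hst (eq_of_subset_of_card_le hts (by omega)).symm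
    omega
  have := finrank_sup_add_finrank_inf_eq (span F (v '' s)) (span F (v '' t))
  rw [h_sup, finrank_top, hV, hv.finrank_span_image hι (by omega),
    hv.finrank_span_image hι (by omega), hs, ht] at this
  omega

variable [Fintype F] [Fintype V]

open scoped Classical in
theorem sum_card_secantsThrough :
    (∑ R with R ≠ 0, #(secantsThrough F v R) : ℤ) =
      (Fintype.card ι).choose 2 * ((Fintype.card F : ℤ) ^ 2 - 1) := by
  have h_finrank : ∀ s ∈ powersetCard 2 (univ : Finset ι), finrank F (span F (v '' s)) = 2 := by
    intro s hs
    have hs2 := (mem_powersetCard.1 hs).2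
    rw [hv.finrank_span_image hι (by omega), hs2]
  simp only [secantsThrough]
  rw [sum_card_filter_mem, sum_congr rfl fun s hs ↦ by rw [h_finrank s hs], sum_const, nsmul_eq_mul,
    card_powersetCard, card_univ]

open scoped Classical in
theorem sum_card_offDiag_secantsThrough (hV : finrank F V = 3) :
    (∑ R with R ≠ 0, #(secantsThrough F v R).offDiag : ℤ) =
      (Fintype.card ι).choose 2 * ((Fintype.card ι).choose 2 - 1) * ((Fintype.card F : ℤ) - 1) := by
  have h_offDiag (R : V) : (secantsThrough F v R).offDiag
      = {p ∈ (powersetCard 2 (univ : Finset ι)).offDiag |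
          R ∈ span F (v '' p.1) ⊓ span F (v '' p.2)} := by
    ext p
    simp only [mem_offDiag, mem_filter, secantsThrough, Submodule.mem_inf]
    tauto
  have h_finrank : ∀ p ∈ (powersetCard 2 (univ : Finset ι)).offDiag,
      finrank F ↥(span F (v '' p.1) ⊓ span F (v '' p.2)) = 1 := by
    intro p hp
    obtain ⟨hs, ht, hst⟩ := mem_offDiag.1 hp
    exact hv.finrank_secant_inf_secant hι hV (mem_powersetCard.1 hs).2 (mem_powersetCard.1 ht).2 hst
  simp only [h_offDiag]
  rw [sum_card_filter_mem, sum_congr rfl fun p hp ↦ by rw [h_finrank p hp], sum_const, nsmul_eq_mul,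
    offDiag_card, card_powersetCard, card_univ, Nat.cast_sub (Nat.le_mul_self _)]
  push_cast
  ring

end IsArc

open scoped Classical in
/-- The vectors representing points on no secant of the arc `v`, which therefore extend it. -/
noncomputable def noSecantVectors (F : Type*) [Field F] [Module F V] [Fintype V] (v : ι → V) :
    Finset V :=
  {R | secantsThrough F v R = ∅}

/-- The vectors representing points off the arc `v` in which three secants of `v` meet. -/
noncomputable def tripleSecantVectors (F : Type*) [Field F] [Module F V] [Fintype V] (v : ι → V) :
    Finset V :=
  {R ∈ offArc F v | #(secantsThrough F v R) = 3}

theorem mem_noSecantVectors [Fintype V] :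
    R ∈ noSecantVectors F v ↔ secantsThrough F v R = ∅ := by
  simp [noSecantVectors]

theorem mem_tripleSecantVectors [Fintype V] :
    R ∈ tripleSecantVectors F v ↔ R ∈ offArc F v ∧ #(secantsThrough F v R) = 3 := by
  simp [tripleSecantVectors]

/-- The sum of `(e - 1) (e - 2)` over the vectors representing points off an arc of `n` vectors in a
space of dimension `3` over a field of `q` elements, where `e` is the number of secants through the
point. -/
def offArcMoment (n : ℕ) (q : ℤ) : ℤ :=
  2 * (q ^ 3 - 1) - 2 * n.choose 2 * (q ^ 2 - 1) + n.choose 2 * (n.choose 2 - 1) * (q - 1)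
    - n * (q - 1) * ((n - 2) * (n - 3))

namespace IsArc

variable (hv : IsArc F 3 v) (hι : 3 ≤ Fintype.card ι) [Fintype F] [Fintype V]
include hv hι

open scoped Classical in
theorem card_ne_zero_notMem_offArc :
    (#{R | R ≠ 0 ∧ R ∉ offArc F v} : ℤ) = Fintype.card ι * ((Fintype.card F : ℤ) - 1) := by
  have h_biUnion : ({R | R ≠ 0 ∧ R ∉ offArc F v} : Finset V)
      = univ.biUnion fun a ↦ ({R | R ≠ 0 ∧ R ∈ F ∙ v a} : Finset V) := by
    ext R
    simp [mem_offArc]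
  have h_disjoint {a b : ι} (hab : a ≠ b) :
      Disjoint ({R | R ≠ 0 ∧ R ∈ F ∙ v a} : Finset V) ({R | R ≠ 0 ∧ R ∈ F ∙ v b} : Finset V) := by
    refine disjoint_left.2 fun R ha hb ↦ ?_
    simp only [mem_filter_univ] at ha hb
    have := hv.mem_span_image_inter hι (s := {a}) (t := {b}) (card_le_two.trans (by simp))
      (by simpa using ha.2) (by simpa using hb.2)
    simp [hab, ha.1] at this
  rw [h_biUnion, card_biUnion fun a _ b _ hab ↦ h_disjoint hab, Nat.cast_sum]
  simp only [card_filter_ne_zero_mem, finrank_span_singleton (hv.ne_zero hι (by simp) _)]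
  rw [pow_one, sum_const, nsmul_eq_mul, card_univ]

open scoped Classical in
theorem sum_secantsThrough_eq_sum_offArc_add (g : ℕ → ℤ) :
    ∑ R with R ≠ 0, g #(secantsThrough F v R) = ∑ R ∈ offArc F v, g #(secantsThrough F v R)
      + Fintype.card ι * ((Fintype.card F : ℤ) - 1) * g (Fintype.card ι - 1) := by
  have h_off : ({R | R ≠ 0 ∧ R ∈ offArc F v} : Finset V) = offArc F v := by
    ext R
    have : Nonempty ι := Fintype.card_pos_iff.1 (by omega)
    rw [mem_filter_univ, and_iff_right_iff_imp]
    exact ne_zero_of_mem_offArc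
  have h_on : ∀ R ∈ ({R | R ≠ 0 ∧ R ∉ offArc F v} : Finset V),
      g #(secantsThrough F v R) = g (Fintype.card ι - 1) := by
    intro R hR
    obtain ⟨hR0, hR⟩ := (mem_filter_univ _).1 hR
    obtain ⟨a, ha⟩ : ∃ a, R ∈ F ∙ v a := by simpa [mem_offArc] using hR
    rw [hv.card_secantsThrough_of_mem_span_singleton hι hR0 ha]
  rw [← sum_filter_add_sum_filter_not _ (· ∈ offArc F v), filter_filter, filter_filter, h_off,
    sum_congr rfl h_on, sum_const, nsmul_eq_mul, hv.card_ne_zero_notMem_offArc hι]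

/-- The second factorial moment `e (e - 1)` of the number `e` of secants through a point counts
ordered pairs of secants; the points of the arc, where `e = n - 1`, are removed. -/
theorem sum_offArc (hV : finrank F V = 3) :
    ∑ R ∈ offArc F v, ((#(secantsThrough F v R) : ℤ) - 1) * (#(secantsThrough F v R) - 2) =
      offArcMoment (Fintype.card ι) (Fintype.card F) := by
  classical
  have h_pointwise (R : V) : ((#(secantsThrough F v R) : ℤ) - 1) * (#(secantsThrough F v R) - 2)
      = 2 - 2 * #(secantsThrough F v R) + #(secantsThrough F v R).offDiag := by
    rw [offDiag_card, Nat.cast_sub (Nat.le_mul_self _)]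
    push_cast
    ring
  have h_ne_zero : (#{R : V | R ≠ 0} : ℤ) = (Fintype.card F : ℤ) ^ 3 - 1 := by
    simpa [hV] using card_filter_ne_zero_mem (⊤ : Submodule F V)
  have h_all := hv.sum_secantsThrough_eq_sum_offArc_add hι (fun e ↦ ((e : ℤ) - 1) * (e - 2))
  simp only [Nat.cast_sub (show 1 ≤ Fintype.card ι by omega)] at h_all
  rw [eq_sub_of_add_eq h_all.symm]
  simp only [h_pointwise, sum_add_distrib, sum_sub_distrib, ← mul_sum, sum_const, nsmul_eq_mul,
    h_ne_zero]
  rw [hv.sum_card_secantsThrough hι, hv.sum_card_offDiag_secantsThrough hι hV, offArcMoment]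
  push_cast
  ring

end IsArc

theorem IsArc.tripleSecantVectors_eq_empty [Fintype V] (hv : IsArc F 3 v)
    (hι : 3 ≤ Fintype.card ι) (hι' : Fintype.card ι ≤ 5) : tripleSecantVectors F v = ∅ := by
  refine eq_empty_of_forall_notMem fun R hR ↦ ?_
  obtain ⟨hR, h3⟩ := mem_tripleSecantVectors.1 hR
  have := hv.two_mul_card_secantsThrough_le hι hR
  omega

/-- Fewer than four secants meet in a point off the arc, and `(e - 1) (e - 2)` is `2` if `e` is
`0` or `3`, and `0` if `e` is `1` or `2`. -/
theorem IsArc.two_mul_card_noSecantVectors_add [Fintype F] [Fintype V] (hv : IsArc F 3 v)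
    (hι : 3 ≤ Fintype.card ι) (hι' : Fintype.card ι ≤ 7) (hV : finrank F V = 3) :
    (2 * (#(noSecantVectors F v) + #(tripleSecantVectors F v)) : ℤ) =
      offArcMoment (Fintype.card ι) (Fintype.card F) := by
  classical
  have h_value : ∀ R ∈ offArc F v,
      ((#(secantsThrough F v R) : ℤ) - 1) * (#(secantsThrough F v R) - 2) =
        2 * ((if #(secantsThrough F v R) = 0 then 1 else 0)
          + (if #(secantsThrough F v R) = 3 then 1 else 0)) := by
    intro R hR
    have := hv.two_mul_card_secantsThrough_le hι hR
    generalize #(secantsThrough F v R) = e at *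
    have : e ≤ 3 := by omega
    interval_cases e <;> norm_num
  have h_empty : noSecantVectors F v =
      {R ∈ offArc F v | #(secantsThrough F v R) = 0} := by
    ext R
    rw [mem_noSecantVectors, mem_filter, card_eq_zero, iff_and_self]
    refine fun hR ↦ mem_offArc.2 fun a ha ↦ ?_
    obtain ⟨b, hba⟩ := Fintype.exists_ne_of_one_lt_card (by omega) a
    have : {a, b} ∈ secantsThrough F v R :=
      mem_secantsThrough.2 ⟨card_pair hba.symm, span_mono (by simp) ha⟩
    simp [hR] at this
  rw [← hv.sum_offArc hι hV, sum_congr rfl h_value, ← mul_sum, sum_add_distrib,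
    sum_boole, sum_boole, h_empty]
  rfl

end Secants

section Extension

variable {F V : Type*} [Field F] [AddCommGroup V] [Module F V] {k n : ℕ} {v : Fin n → V} {R : V}

theorem isArc_cons_iff (hkn : k + 1 ≤ n) :
    IsArc F (k + 1) (Fin.cons R v : Fin (n + 1) → V) ↔
      IsArc F (k + 1) v ∧ ∀ s : Finset (Fin n), #s = k → R ∉ span F (v '' s) := by
  have h_comp : (Fin.cons R v : Fin (n + 1) → V) ∘ Fin.succ = v := Fin.cons_comp_succ ..
  have h_image (s : Finset (Fin n)) :
      (Fin.cons R v : Fin (n + 1) → V) '' (s.map (Fin.succEmb n) : Set (Fin (n + 1))) = v '' s := by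
    rw [coe_map, Fin.coe_succEmb, ← Set.image_comp, h_comp]
  have h_zero (s : Finset (Fin n)) : (0 : Fin (n + 1)) ∉ s.map (Fin.succEmb n) := by simp
  constructor
  · refine fun h ↦ ⟨h_comp ▸ h.comp_injective (Fin.succ_injective n), fun s hs ↦ ?_⟩
    have := h (insert 0 (s.map (Fin.succEmb n))) (by rw [card_insert_of_notMem (h_zero s)]; simpa)
    rw [coe_insert] at this
    have := this.notMem_span_of_insert (h_zero s)
    rwa [h_image] at this
  · rintro ⟨hv, hR⟩ t ht
    have h_tail (s : Finset (Fin n)) (hs : #s ≤ k + 1) :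
        LinearIndepOn F (Fin.cons R v : Fin (n + 1) → V) (s.map (Fin.succEmb n)) := by
      rw [coe_map]
      apply LinearIndepOn.image_of_comp
      rw [Fin.coe_succEmb, h_comp]
      exact hv.linearIndepOn (by simpa) hs
    obtain ⟨s, hst⟩ : ∃ s : Finset (Fin n), t.erase 0 = s.map (Fin.succEmb n) := by
      obtain ⟨s, -, hs⟩ := Finset.subset_map_iff (f := Fin.succEmb n) (s := t.erase 0) (t := univ).1
        fun i hi ↦ by simpa using Fin.exists_succ_eq.2 (ne_of_mem_erase hi)
      exact ⟨s, hs⟩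
    by_cases h0 : 0 ∈ t
    · have hs : #s = k := by
        rw [← card_map (Fin.succEmb n), ← hst, card_erase_of_mem h0, ht, Nat.add_sub_cancel]
      rw [← insert_erase h0, hst, coe_insert]
      refine (linearIndepOn_insert (h_zero s)).2 ⟨h_tail s (by omega), ?_⟩
      rw [h_image]
      exact hR s hs
    · rw [erase_eq_of_notMem h0] at hst
      rw [hst]
      exact h_tail s (by rw [← card_map (Fin.succEmb n), ← hst, ht])

theorem isArc_three_cons_iff (hn : 3 ≤ n) :
    IsArc F 3 (Fin.cons R v : Fin (n + 1) → V) ↔ IsArc F 3 v ∧ secantsThrough F v R = ∅ := by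
  simp [isArc_cons_iff hn, eq_empty_iff_forall_notMem, mem_secantsThrough]

theorem card_arcs_succ [Fintype V] (hn : 3 ≤ n) :
    #(arcs F 3 (Fin (n + 1)) V) =
      ∑ v ∈ arcs F 3 (Fin n) V, #(noSecantVectors F v) := by
  rw [← card_sigma]
  refine card_nbij' (fun w ↦ ⟨Fin.tail w, w 0⟩) (fun p ↦ Fin.cons p.2 p.1) (fun w hw ↦ ?_)
    (fun p hp ↦ ?_) (fun w _ ↦ by simp)
    (fun p _ ↦ by simp)
  · rw [mem_coe, mem_arcs, ← Fin.cons_self_tail w, isArc_three_cons_iff hn] at hw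
    simpa [mem_noSecantVectors] using hw
  · rw [mem_coe, mem_arcs, isArc_three_cons_iff hn]
    simpa [mem_noSecantVectors] using hp

end Extension

section Recursion

variable {F V : Type*} [Field F] [Fintype F] [AddCommGroup V] [Module F V] [Fintype V] {n : ℕ}

theorem two_mul_card_arcs_succ_add (hn : 3 ≤ n) (hn' : n ≤ 7) (hV : finrank F V = 3) :
    2 * (#(arcs F 3 (Fin (n + 1)) V)
      + ∑ v ∈ arcs F 3 (Fin n) V, (#(tripleSecantVectors F v) : ℤ)) =
      #(arcs F 3 (Fin n) V) * offArcMoment n (Fintype.card F) := by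
  rw [card_arcs_succ hn, Nat.cast_sum, ← sum_add_distrib, mul_sum, ← nsmul_eq_mul]
  refine sum_eq_card_nsmul fun v hv ↦ ?_
  rw [(mem_arcs.1 hv).two_mul_card_noSecantVectors_add (by simpa) (by simpa) hV, Fintype.card_fin]

theorem two_mul_card_arcs_succ_of_le_five (hn : 3 ≤ n) (hn' : n ≤ 5) (hV : finrank F V = 3) :
    (2 * #(arcs F 3 (Fin (n + 1)) V) : ℤ) =
      #(arcs F 3 (Fin n) V) * offArcMoment n (Fintype.card F) := by
  rw [← two_mul_card_arcs_succ_add hn (by omega) hV, sum_eq_zero fun v hv ↦ ?_, add_zero]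
  rw [(mem_arcs.1 hv).tripleSecantVectors_eq_empty (by simpa) (by simpa), card_empty,
    Nat.cast_zero]

theorem card_arcs_six (hV : finrank F V = 3) {q : ℤ} (hq : q = Fintype.card F) :
    (#(arcs F 3 (Fin 6) V) : ℤ) = #(arcs F 3 (Fin 3) V) * (q - 1) ^ 5 *
      ((q ^ 2 - 5 * q + 6) * (q ^ 2 - 9 * q + 21)) := by
  have h_step (n : ℕ) (hn : 3 ≤ n) (hn' : n ≤ 5) (m : ℤ) (hm : offArcMoment n q = 2 * m) :
      (#(arcs F 3 (Fin (n + 1)) V) : ℤ) = #(arcs F 3 (Fin n) V) * m := by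
    have := two_mul_card_arcs_succ_of_le_five (F := F) hn hn' hV
    rw [← hq, hm] at this
    linarith
  have h_three : offArcMoment 3 q = 2 * (q - 1) ^ 3 := by
    rw [offArcMoment, show Nat.choose 3 2 = 3 from rfl]
    ring
  have h_four : offArcMoment 4 q = 2 * ((q - 1) * (q ^ 2 - 5 * q + 6)) := by
    rw [offArcMoment, show Nat.choose 4 2 = 6 from rfl]
    ring
  have h_five : offArcMoment 5 q = 2 * ((q - 1) * (q ^ 2 - 9 * q + 21)) := by
    rw [offArcMoment, show Nat.choose 5 2 = 10 from rfl]
    ring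
  rw [h_step 5 (by simp) (by simp) _ h_five, h_step 4 (by simp) (by simp) _ h_four,
    h_step 3 (by simp) (by simp) _ h_three]
  ring

theorem card_arcs_seven_add (hV : finrank F V = 3) {q : ℤ} (hq : q = Fintype.card F) :
    #(arcs F 3 (Fin 7) V) + ∑ v ∈ arcs F 3 (Fin 6) V, (#(tripleSecantVectors F v) : ℤ) =
      #(arcs F 3 (Fin 6) V) * ((q - 1) * (q ^ 2 - 14 * q + 55)) := by
  have h_moment : offArcMoment 6 q = 2 * ((q - 1) * (q ^ 2 - 14 * q + 55)) := by
    rw [offArcMoment, show Nat.choose 6 2 = 15 from rfl]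
    ring
  have h_step := two_mul_card_arcs_succ_add (F := F) (V := V) (n := 6) (by simp) (by simp) hV
  rw [← hq, h_moment] at h_step
  linarith

end Recursion

section Synthemes

/-- The fifteen partitions of six indices into three pairs, called synthemes by Sylvester. -/
def synthemes : Finset (Finset (Finset (Fin 6))) :=
  {S ∈ powersetCard 3 (powersetCard 2 univ) | ∀ s ∈ S, ∀ t ∈ S, s ≠ t → Disjoint s t}

theorem card_synthemes : #(synthemes) = 15 := by
  decide +kernel

theorem mem_synthemes {S : Finset (Finset (Fin 6))} :
    S ∈ synthemes ↔
      (#S = 3 ∧ ∀ s ∈ S, #s = 2) ∧ ∀ s ∈ S, ∀ t ∈ S, s ≠ t → Disjoint s t := by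
  simp [synthemes, mem_powersetCard, subset_iff, and_comm]

theorem exists_equiv_of_mem_synthemes {S : Finset (Finset (Fin 6))} (hS : S ∈ synthemes) :
    ∃ e : Fin 3 × Fin 2 ≃ Fin 6, S = univ.image fun i ↦ {e (i, 0), e (i, 1)} := by
  obtain ⟨⟨hS3, hS2⟩, h_disj⟩ := mem_synthemes.1 hS
  let t := (S.equivFinOfCardEq hS3).symm
  let f : Fin 3 × Fin 2 → Fin 6 := fun p ↦ (t p.1).1.orderEmbOfFin (hS2 _ (t p.1).2) p.2
  have h_mem (i : Fin 3) (j : Fin 2) : f (i, j) ∈ (t i).1 := orderEmbOfFin_mem ..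
  have h_inj : f.Injective := by
    rintro ⟨i, j⟩ ⟨i', j'⟩ h
    obtain rfl : i = i' := by
      by_contra h_ne
      have := h_disj _ (t i).2 _ (t i').2 (by simpa [Subtype.ext_iff] using h_ne)
      exact disjoint_left.1 this (h_mem i j) (h ▸ h_mem i' j')
    simpa [f] using h
  have h_bij : f.Bijective := (Fintype.bijective_iff_injective_and_card f).2 ⟨h_inj, by simp⟩
  have h_pair (i : Fin 3) : (t i).1 = {f (i, 0), f (i, 1)} := by
    refine (eq_of_subset_of_card_le (by simp [insert_subset_iff, h_mem]) ?_).symm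
    rw [hS2 _ (t i).2, card_pair (h_inj.ne (by simp))]
  refine ⟨.ofBijective f h_bij, ?_⟩
  ext s
  simp only [Equiv.ofBijective_apply, ← h_pair, mem_image, mem_univ, true_and]
  exact ⟨fun hs ↦ ⟨t.symm ⟨s, hs⟩, by simp⟩, by rintro ⟨i, rfl⟩; exact (t i).2⟩

end Synthemes

section TripleSecants

variable {F V : Type*} [Field F] [AddCommGroup V] [Module F V] [Fintype V]

theorem IsArc.secantsThrough_mem_synthemes {v : Fin 6 → V} (hv : IsArc F 3 v) {R : V}
    (hR : R ∈ tripleSecantVectors F v) : secantsThrough F v R ∈ synthemes := by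
  obtain ⟨hR, h3⟩ := mem_tripleSecantVectors.1 hR
  exact mem_synthemes.2 ⟨⟨h3, fun s hs ↦ (mem_secantsThrough.1 hs).1⟩,
    fun s hs t ht ↦ hv.disjoint_of_mem_secantsThrough (by simp) hR hs ht⟩

theorem IsArc.subset_secantsThrough_iff {v : Fin 6 → V} (hv : IsArc F 3 v) {R : V}
    {S : Finset (Finset (Fin 6))} (hS : S ∈ synthemes) :
    R ≠ 0 ∧ S ⊆ secantsThrough F v R ↔
      R ∈ tripleSecantVectors F v ∧ secantsThrough F v R = S := by
  obtain ⟨⟨hS3, -⟩, h_disj⟩ := mem_synthemes.1 hS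
  constructor
  · rintro ⟨hR, h_sub⟩
    have h_off : R ∈ offArc F v := by
      refine mem_offArc.2 fun a ha ↦ ?_
      obtain ⟨s, hs, t, ht, hst⟩ := one_lt_card.1 (show 1 < #S by omega)
      have h_through {s} (hs : s ∈ S) : a ∈ s :=
        ((hv.mem_secantsThrough_iff_of_mem_span_singleton (by simp) hR ha).1 (h_sub hs)).2
      exact disjoint_left.1 (h_disj s hs t ht hst) (h_through hs) (h_through ht)
    have h_le := hv.two_mul_card_secantsThrough_le (by simp) h_off
    rw [Fintype.card_fin] at h_le
    have h_eq := eq_of_subset_of_card_le h_sub (by omega)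
    exact ⟨mem_tripleSecantVectors.2 ⟨h_off, h_eq ▸ hS3⟩, h_eq.symm⟩
  · rintro ⟨hR, rfl⟩
    exact ⟨ne_zero_of_mem_offArc (mem_tripleSecantVectors.1 hR).1, Subset.rfl⟩

open scoped Classical in
/-- The arcs of six vectors arranged in three pairs, together with a representative of a point on
the three secants that these pairs span. -/
noncomputable def concurrentArcs (F V : Type*) [Field F] [AddCommGroup V] [Module F V]
    [Fintype V] : Finset ((Fin 3 × Fin 2 → V) × V) :=
  {p | IsArc F 3 p.1 ∧ p.2 ≠ 0 ∧ ∀ i, p.2 ∈ span F {p.1 (i, 0), p.1 (i, 1)}}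

theorem mem_concurrentArcs {p : (Fin 3 × Fin 2 → V) × V} :
    p ∈ concurrentArcs F V ↔
      IsArc F 3 p.1 ∧ p.2 ≠ 0 ∧ ∀ i, p.2 ∈ span F {p.1 (i, 0), p.1 (i, 1)} := by
  simp [concurrentArcs]

open scoped Classical in
theorem sum_card_subset_secantsThrough {S : Finset (Finset (Fin 6))} (hS : S ∈ synthemes) :
    ∑ v ∈ arcs F 3 (Fin 6) V, #{R | R ≠ 0 ∧ S ⊆ secantsThrough F v R} =
      #(concurrentArcs F V) := by
  obtain ⟨e, rfl⟩ := exists_equiv_of_mem_synthemes hS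
  have h_sub (v : Fin 6 → V) (R : V) :
      (univ.image fun i ↦ {e (i, 0), e (i, 1)}) ⊆ secantsThrough F v R ↔
        ∀ i, R ∈ span F {v (e (i, 0)), v (e (i, 1))} := by
    simp [subset_iff, mem_secantsThrough, Set.image_pair]
  rw [← card_sigma]
  refine card_nbij' (fun p ↦ (p.1 ∘ e, p.2)) (fun p ↦ ⟨p.1 ∘ e.symm, p.2⟩) (fun p hp ↦ ?_)
    (fun p hp ↦ ?_) (fun p _ ↦ ?_) (fun p _ ↦ ?_)
  · simp_all [mem_concurrentArcs, isArc_comp_equiv]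
  · simp_all [mem_concurrentArcs, isArc_comp_equiv]
  · ext <;> simp
  · ext <;> simp

theorem sum_card_tripleSecantVectors :
    ∑ v ∈ arcs F 3 (Fin 6) V, #(tripleSecantVectors F v) = 15 * #(concurrentArcs F V) := by
  classical
  have h_fiber : ∀ v ∈ arcs F 3 (Fin 6) V, #(tripleSecantVectors F v) =
      ∑ S ∈ synthemes, #{R | R ≠ 0 ∧ S ⊆ secantsThrough F v R} := by
    intro v hv
    rw [card_eq_sum_card_fiberwise fun R hR ↦ (mem_arcs.1 hv).secantsThrough_mem_synthemes hR]
    refine sum_congr rfl fun S hS ↦ congrArg card ?_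
    ext R
    simp [(mem_arcs.1 hv).subset_secantsThrough_iff hS]
  rw [sum_congr rfl h_fiber, sum_comm, sum_congr rfl fun S hS ↦ sum_card_subset_secantsThrough hS,
    sum_const, card_synthemes, smul_eq_mul]

end TripleSecants

section ConcurrentArcs

variable {F V ι : Type*} [Field F] [AddCommGroup V] [Module F V]

open scoped Classical in
/-- The arcs of six vectors arranged in three pairs with a common sum. -/
noncomputable def balancedArcs (F V : Type*) [Field F] [AddCommGroup V] [Module F V] [Fintype V] :
    Finset (Fin 3 × Fin 2 → V) :=
  {u | IsArc F 3 u ∧ ∀ i, u (i, 0) + u (i, 1) = u (0, 0) + u (0, 1)}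

theorem mem_balancedArcs [Fintype V] {u : Fin 3 × Fin 2 → V} :
    u ∈ balancedArcs F V ↔ IsArc F 3 u ∧ ∀ i, u (i, 0) + u (i, 1) = u (0, 0) + u (0, 1) := by
  simp [balancedArcs]

theorem IsArc.eq_of_smul_add_smul_eq [Fintype ι] {v : ι → V} {k : ℕ} (hv : IsArc F k v)
    (hk : k ≤ Fintype.card ι) (h2 : 2 ≤ k) {i j : ι} (hij : i ≠ j) {a b c d : F}
    (h : a • v i + b • v j = c • v i + d • v j) : a = c ∧ b = d := by
  classical
  have h_pair := (LinearIndepOn.pair_iff v hij).1 <| by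
    simpa using hv.linearIndepOn hk (card_le_two.trans h2 : #{i, j} ≤ k)
  have := h_pair (a - c) (b - d) (by
    rw [sub_smul, sub_smul, sub_add_sub_comm, h, sub_self])
  simpa [sub_eq_zero] using this

/-- A point collinear with each of three disjoint pairs is none of the six points, so both of its
coordinates with respect to each pair are nonzero. -/
theorem exists_units_smul_add_smul_eq {v : Fin 3 × Fin 2 → V} (hv : IsArc F 3 v) {R : V}
    (hR : R ≠ 0) (h : ∀ i, R ∈ span F {v (i, 0), v (i, 1)}) (i : Fin 3) :
    ∃ a b : Fˣ, a • v (i, 0) + b • v (i, 1) = R := by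
  have h_off (j : Fin 2) : R ∉ F ∙ v (i, j) := by
    intro hj
    have := hv.mem_span_image_inter (by simp) (s := {(i, j)}) (t := {(i + 1, 0), (i + 1, 1)})
      (by grw [card_union_le, card_singleton, card_le_two]) (by simpa using hj)
      (by simpa [Set.image_pair] using h (i + 1))
    rw [singleton_inter_of_notMem (by simp)] at this
    simp [hR] at this
  obtain ⟨a, b, hab⟩ := mem_span_pair.1 (h i)
  have ha : a ≠ 0 := by
    rintro rfl
    exact h_off 1 (mem_span_singleton.2 ⟨b, by simpa using hab⟩)
  have hb : b ≠ 0 := by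
    rintro rfl
    exact h_off 0 (mem_span_singleton.2 ⟨a, by simpa using hab⟩)
  exact ⟨.mk0 a ha, .mk0 b hb, hab⟩

/-- Rescaling each of the six vectors to the component along it of the common point makes the
pairs balanced. -/
theorem card_concurrentArcs [Fintype F] [Fintype V] :
    #(concurrentArcs F V) = (Fintype.card F - 1) ^ 6 * #(balancedArcs F V) := by
  classical
  have h_scalars : (Fintype.card F - 1) ^ 6 = #(univ : Finset (Fin 3 × Fin 2 → Fˣ)) := by
    simp [Fintype.card_units]
  rw [h_scalars, ← card_product]
  symm
  refine card_nbij (fun p ↦ (fun i ↦ p.1 i • p.2 i, p.2 (0, 0) + p.2 (0, 1)))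
    (fun p hp ↦ ?_) ?_ (fun p hp ↦ ?_)
  · obtain ⟨hu, h_sum⟩ := mem_balancedArcs.1 (mem_product.1 hp).2
    refine mem_concurrentArcs.2 ⟨(isArc_units_smul _).2 hu, fun h0 ↦ ?_, fun i ↦ ?_⟩
    · have := hu.eq_of_smul_add_smul_eq (by simp) (by simp) (i := (0, 0)) (j := (0, 1)) (by simp)
        (a := 1) (b := 1) (c := 0) (d := 0) (by simpa using h0)
      simp at this
    · refine mem_span_pair.2 ⟨↑(p.1 (i, 0))⁻¹, ↑(p.1 (i, 1))⁻¹, ?_⟩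
      simp [← h_sum i, Units.smul_def]
  · rintro ⟨c, u⟩ hu ⟨c', u'⟩ hu' h
    obtain ⟨hu, h_sum⟩ := mem_balancedArcs.1 (mem_product.1 hu).2
    obtain ⟨-, h_sum'⟩ := mem_balancedArcs.1 (mem_product.1 hu').2
    obtain ⟨h_smul, h_point⟩ := Prod.ext_iff.1 h
    dsimp only at h_sum h_sum' h_smul h_point
    have h_vec (i) : u' i = (↑((c' i)⁻¹ * c i) : F) • u i := by
      rw [← Units.smul_def, mul_smul, congrFun h_smul i, inv_smul_smul]
    have h_coord (i : Fin 3) := hu.eq_of_smul_add_smul_eq (by simp) (by simp)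
      (i := (i, 0)) (j := (i, 1)) (by simp) (a := 1) (b := 1) <| by
        rw [← h_vec, ← h_vec, one_smul, one_smul, h_sum, h_point, h_sum' i]
    have h_one : ∀ i, (c' i)⁻¹ * c i = 1 := by
      simpa only [Prod.forall, Fin.forall_fin_two, @eq_comm F 1, Units.val_eq_one] using h_coord
    refine Prod.ext (funext fun i ↦ (inv_mul_eq_one.1 (h_one i)).symm) (funext fun i ↦ ?_)
    simp [h_vec, h_one]
  · obtain ⟨hv, hR, h_span⟩ := mem_concurrentArcs.1 hp
    choose a b hab using exists_units_smul_add_smul_eq hv hR h_span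
    let c : Fin 3 × Fin 2 → Fˣ := fun i ↦ ![a i.1, b i.1] i.2
    have h_sum (i) : c (i, 0) • p.1 (i, 0) + c (i, 1) • p.1 (i, 1) = p.2 := hab i
    refine ⟨(c⁻¹, fun i ↦ c i • p.1 i), ?_, ?_⟩
    · simp [mem_balancedArcs, isArc_units_smul, hv, h_sum]
    · simp [h_sum]

end ConcurrentArcs

section Coordinates

variable {F V ι : Type*} [Field F]

theorem isArc_three_iff_forall_lt [AddCommGroup V] [Module F V] [LinearOrder ι] {v : ι → V} :
    IsArc F 3 v ↔ ∀ i j k, i < j → j < k → LinearIndependent F ![v i, v j, v k] := by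
  have h_comp (i j k : ι) : v ∘ ![i, j, k] = ![v i, v j, v k] := by
    ext l
    fin_cases l <;> rfl
  rw [isArc_iff_forall_orderEmbedding]
  constructor
  · intro h i j k hij hjk
    have h_mono : StrictMono ![i, j, k] := Fin.strictMono_iff_lt_succ.2 <| by
      simp [Fin.forall_fin_two, hij, hjk]
    rw [← h_comp]
    exact h (.ofStrictMono _ h_mono)
  · intro h f
    have hf : (f : Fin 3 → ι) = ![f 0, f 1, f 2] := by
      ext l
      fin_cases l <;> rfl
    rw [hf, h_comp]
    exact h _ _ _ (by simp) (by simp)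

theorem linearIndependent_vec_three_iff {a b c : Fin 3 → F} :
    LinearIndependent F ![a, b, c] ↔ (Matrix.of ![a, b, c]).det ≠ 0 := by
  rw [← isUnit_iff_ne_zero, ← Matrix.isUnit_iff_isUnit_det,
    ← Matrix.linearIndependent_rows_iff_isUnit]
  rfl

/-- The coordinates of three pairs of vectors with a common sum in the frame formed by the first
pair and the first vector of the second pair; the remaining freedom is the vector `(x, y, z)`. -/
def balancedCoords (z : F) (p : F × F) (i : Fin 3 × Fin 2) : Fin 3 → F :=
  ![![![1, 0, 0], ![0, 1, 0]],
    ![![0, 0, 1], ![1, 1, -1]],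
    ![![p.1, p.2, z], ![1 - p.1, 1 - p.2, -z]]] i.1 i.2

/-- Up to sign, the minors are `1`, `z`, `x - y` and, for `t = x` and `t = y`, the differences
`t`, `t - 1`, `t + z`, `t + z - 1`. -/
theorem isArc_balancedCoords_iff {z : F} {p : F × F} :
    IsArc F 3 (balancedCoords z p) ↔
      z ≠ 0 ∧ p.1 ∉ ({0, 1, -z, 1 - z} : Set F) ∧ p.2 ∉ ({0, 1, -z, 1 - z} : Set F)
        ∧ p.1 ≠ p.2 := by
  obtain ⟨x, y⟩ := p
  have h_vec : balancedCoords z (x, y) ∘ finProdFinEquiv.symm =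
      ![![1, 0, 0], ![0, 1, 0], ![0, 0, 1], ![1, 1, -1], ![x, y, z], ![1 - x, 1 - y, -z]] := by
    ext i : 1
    fin_cases i <;> rfl
  rw [← isArc_comp_equiv finProdFinEquiv.symm, h_vec, isArc_three_iff_forall_lt]
  simp only [linearIndependent_vec_three_iff]
  suffices h_minors :
      (z ≠ 0 ∧ (y ≠ 0 ∧ y - 1 ≠ 0) ∧ (z + y ≠ 0 ∧ -z + (1 - y) ≠ 0) ∧ -(y * z) - z * (1 - y) ≠ 0) ∧
        ((x ≠ 0 ∧ 1 - x ≠ 0) ∧ (-z + -x ≠ 0 ∧ z + (x - 1) ≠ 0) ∧ x * z + z * (1 - x) ≠ 0) ∧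
        ((y - x ≠ 0 ∧ x - y ≠ 0) ∧ x * (1 - y) - y * (1 - x) ≠ 0) ∧
        -(y * z) - z * (1 - y) + x * z + z * (1 - x) + -(x * (1 - y)) + y * (1 - x) ≠ 0 ↔
      z ≠ 0 ∧ (x ≠ 0 ∧ x ≠ 1 ∧ x ≠ -z ∧ x ≠ 1 - z) ∧ (y ≠ 0 ∧ y ≠ 1 ∧ y ≠ -z ∧ y ≠ 1 - z) ∧
        x ≠ y by
    simpa [Fin.forall_fin_succ, Matrix.det_fin_three] using h_minors
  constructor <;> grind (splits := 30)

variable [AddCommGroup V] [Module F V]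

theorem linearCombination_balancedCoords_fst (G : Fin 3 → V) (z : F) (p : F × F) (i : Fin 3) :
    Fintype.linearCombination F G (balancedCoords z p (i, 0)) =
      ![G 0, G 2, Fintype.linearCombination F G ![p.1, p.2, z]] i := by
  fin_cases i <;> simp [balancedCoords, Fintype.linearCombination_apply, Fin.sum_univ_three]

theorem linearCombination_balancedCoords_zero_one (G : Fin 3 → V) (z : F) (p : F × F) :
    Fintype.linearCombination F G (balancedCoords z p (0, 1)) = G 1 := by
  simp [balancedCoords, Fintype.linearCombination_apply, Fin.sum_univ_three]

theorem linearCombination_balancedCoords_add (G : Fin 3 → V) (z : F) (p : F × F) (i : Fin 3) :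
    Fintype.linearCombination F G (balancedCoords z p (i, 0))
      + Fintype.linearCombination F G (balancedCoords z p (i, 1)) = G 0 + G 1 := by
  have h_sum : balancedCoords z p (i, 0) + balancedCoords z p (i, 1) = ![1, 1, 0] := by
    fin_cases i <;> simp [balancedCoords]
  rw [← map_add, h_sum]
  simp [Fintype.linearCombination_apply, Fin.sum_univ_three]

theorem exists_linearCombination_comp_balancedCoords_eq [FiniteDimensional F V]
    (hV : finrank F V = 3) {u : Fin 3 × Fin 2 → V} (hu : IsArc F 3 u)
    (h_sum : ∀ i, u (i, 0) + u (i, 1) = u (0, 0) + u (0, 1)) :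
    ∃ (G : Fin 3 → V) (z : F) (p : F × F), LinearIndependent F G ∧
      Fintype.linearCombination F G ∘ balancedCoords z p = u := by
  let G : Fin 3 → V := ![u (0, 0), u (0, 1), u (1, 0)]
  have hG : LinearIndependent F G := by
    convert isArc_iff_forall_injective.1 hu ![(0, 0), (0, 1), (1, 0)] (by decide) using 1
    ext i
    fin_cases i <;> rfl
  obtain ⟨c, hc⟩ : ∃ c, Fintype.linearCombination F G c = u (2, 0) := by
    rw [← LinearMap.mem_range, Fintype.range_linearCombination,
      hG.span_eq_top_of_card_eq_finrank' (by simp [hV])]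
    trivial
  have h_fst (i) : Fintype.linearCombination F G (balancedCoords (c 2) (c 0, c 1) (i, 0))
      = u (i, 0) := by
    have h_vec : ![c 0, c 1, c 2] = c := by
      ext l
      fin_cases l <;> rfl
    rw [linearCombination_balancedCoords_fst, h_vec, hc]
    fin_cases i <;> rfl
  refine ⟨G, c 2, (c 0, c 1), hG, ?_⟩
  ext ⟨i, j⟩
  match j with
  | 0 => exact h_fst i
  | 1 =>
    apply add_left_cancel (a := u (i, 0))
    rw [h_sum, ← h_fst]
    exact linearCombination_balancedCoords_add ..

open scoped Classical in
theorem card_balancedArcs [Fintype F] [Fintype V] (hV : finrank F V = 3) :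
    #(balancedArcs F V) = #(arcs F 3 (Fin 3) V) *
      #{c : F × F × F | IsArc F 3 (balancedCoords c.1 c.2)} := by
  have h_frame {G : Fin 3 → V} : G ∈ arcs F 3 (Fin 3) V ↔ LinearIndependent F G := by
    rw [mem_arcs, isArc_iff_linearIndependent (by simp)]
  rw [← card_product]
  symm
  refine card_nbij (fun a ↦ Fintype.linearCombination F a.1 ∘ balancedCoords a.2.1 a.2.2)
    (fun a ha ↦ ?_) ?_ (fun u hu ↦ ?_)
  · obtain ⟨hG, hc⟩ := mem_product.1 ha
    refine mem_balancedArcs.2 ⟨?_, fun i ↦ ?_⟩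
    · rw [isArc_linearMap_comp (h_frame.1 hG).fintypeLinearCombination_injective]
      exact (mem_filter_univ a.2).1 hc
    · exact (linearCombination_balancedCoords_add ..).trans
        (linearCombination_balancedCoords_add ..).symm
  · rintro ⟨G, z, p⟩ hG ⟨G', z', p'⟩ - h
    have h_fst (i) := congrFun h (i, 0)
    have h_snd := congrFun h (0, 1)
    simp only [Function.comp_apply, linearCombination_balancedCoords_fst,
      linearCombination_balancedCoords_zero_one] at h_fst h_snd
    obtain rfl : G = G' := by
      ext i
      match i with
      | 0 => exact h_fst 0
      | 1 => exact h_snd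
      | 2 => exact h_fst 1
    have := (h_frame.1 (mem_product.1 hG).1).fintypeLinearCombination_injective (h_fst 2)
    simp_all [Prod.ext_iff]
  · obtain ⟨hu, h_sum⟩ := mem_balancedArcs.1 hu
    obtain ⟨G, z, p, hG, rfl⟩ := exists_linearCombination_comp_balancedCoords_eq hV hu h_sum
    rw [isArc_linearMap_comp hG.fintypeLinearCombination_injective] at hu
    exact ⟨(G, z, p), mem_product.2 ⟨h_frame.2 hG, (mem_filter_univ _).2 hu⟩, rfl⟩

end Coordinates

section CountingCoordinates

theorem card_insert_zero_one_neg_one_sub {F : Type*} [Field F] [DecidableEq F] {z : F}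
    (hz : z ≠ 0) :
    (#{0, 1, -z, 1 - z} : ℤ) = 4 - (if z = 1 then 1 else 0) - (if z = -1 then 1 else 0) := by
  split_ifs <;> grind [card_insert_eq_ite, card_singleton]

variable {F : Type*} [Field F] [Fintype F]

theorem even_card_iff_one_eq_neg_one : Even (Fintype.card F) ↔ (1 : F) = -1 := by
  rw [eq_comm, neg_one_eq_one_iff, FiniteField.even_card_iff_char_two, Nat.even_iff]

theorem card_offDiag_compl_of_ne_zero [DecidableEq F] {z : F} (hz : z ≠ 0) {q : ℤ}
    (hq : q = Fintype.card F) :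
    (#(({0, 1, -z, 1 - z} : Finset F)ᶜ).offDiag : ℤ) =
      (q - 4) * (q - 5) + (2 * q - 8) * ((if z = 1 then 1 else 0) + (if z = -1 then 1 else 0))
        + 2 * (if z = 1 ∧ z = -1 then 1 else 0) := by
  have h_compl : (#({0, 1, -z, 1 - z} : Finset F)ᶜ : ℤ) = q - #{0, 1, -z, 1 - z} := by
    rw [card_compl, Nat.cast_sub (card_le_univ _), hq]
  rw [offDiag_card, Nat.cast_sub (Nat.le_mul_self _), Nat.cast_mul, h_compl,
    card_insert_zero_one_neg_one_sub hz, ite_and]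
  split_ifs <;> ring

theorem card_isArc_balancedCoords_eq_sum [DecidableEq F]
    [DecidablePred fun c : F × F × F ↦ IsArc F 3 (balancedCoords c.1 c.2)] :
    #{c : F × F × F | IsArc F 3 (balancedCoords c.1 c.2)} =
      ∑ z ∈ univ.erase (0 : F), #(({0, 1, -z, 1 - z} : Finset F)ᶜ).offDiag := by
  rw [← card_sigma]
  refine card_equiv (Equiv.sigmaEquivProd F (F × F)).symm fun c ↦ ?_
  simp [isArc_balancedCoords_iff]

/-- The exceptional values `z = 1` and `z = -1`, for which two of the four excluded values
coincide, are the same element when `q` is even: this is the source of the parity term. -/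
theorem card_isArc_balancedCoords
    [DecidablePred fun c : F × F × F ↦ IsArc F 3 (balancedCoords c.1 c.2)]
    {q : ℤ} (hq : q = Fintype.card F) :
    (#{c : F × F × F | IsArc F 3 (balancedCoords c.1 c.2)} : ℤ) =
      (q - 3) ^ 2 * (q - 4) + 2 * (if Even (Fintype.card F) then 1 else 0) := by
  classical
  have h_card : (#(univ.erase (0 : F)) : ℤ) = q - 1 := by
    rw [cast_card_erase_of_mem (mem_univ _), card_univ, hq]
  rw [card_isArc_balancedCoords_eq_sum, Nat.cast_sum, sum_congr rfl fun z hz ↦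
    card_offDiag_compl_of_ne_zero (ne_of_mem_erase hz) hq]
  simp only [ite_and, sum_add_distrib, ← mul_sum, sum_const, sum_ite_eq', nsmul_eq_mul, h_card]
  have h_neg_one : (-1 : F) ∈ univ.erase 0 ∧ (1 : F) ∈ univ.erase 0 := by simp
  simp only [h_neg_one, even_card_iff_one_eq_neg_one, if_true]
  ring

end CountingCoordinates

section SevenArcs

variable {F : Type*} [Field F] [Fintype F] {q : ℤ}

theorem card_concurrentArcs_eq {V : Type*} [AddCommGroup V] [Module F V] [Fintype V]
    (hV : finrank F V = 3) (hq : q = Fintype.card F) :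
    (#(concurrentArcs F V) : ℤ) = #(arcs F 3 (Fin 3) V) *
      ((q - 1) ^ 6 * ((q - 3) ^ 2 * (q - 4) + 2 * (if Even (Fintype.card F) then 1 else 0))) := by
  classical
  rw [card_concurrentArcs, card_balancedArcs hV, ← card_isArc_balancedCoords hq, hq]
  push_cast [Fintype.card_pos]
  ring

theorem card_arcs_seven {V : Type*} [AddCommGroup V] [Module F V] [Fintype V]
    (hV : finrank F V = 3) (hq : q = Fintype.card F) :
    (#(arcs F 3 (Fin 7) V) : ℤ) = #(arcs F 3 (Fin 3) V) * ((q - 1) ^ 6 *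
      (q ^ 6 - 28 * q ^ 5 + 323 * q ^ 4 - 1952 * q ^ 3 + 6462 * q ^ 2 - 11004 * q + 7470
        - 30 * (if Even (Fintype.card F) then 1 else 0))) := by
  have h_rec := card_arcs_seven_add hV hq
  rw [← Nat.cast_sum, sum_card_tripleSecantVectors, Nat.cast_mul, card_concurrentArcs_eq hV hq,
    card_arcs_six hV hq] at h_rec
  linear_combination h_rec

theorem card_frames (k : ℕ) : #(arcs F k (Fin k) (Fin k → F)) =
    ∏ i ∈ range k, (Fintype.card F ^ k - Fintype.card F ^ i) := by
  rw [← Nat.subtype_card (arcs F k (Fin k) (Fin k → F)) fun v ↦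
    mem_arcs.trans (isArc_iff_linearIndependent (Fintype.card_fin k)),
    card_linearIndependent (finrank_fin_fun F).ge, finrank_fin_fun, prod_range]

theorem card_frames_four (hq : q = Fintype.card F) :
    (#(arcs F 4 (Fin 4) (Fin 4 → F)) : ℤ) =
      q ^ 6 * (q - 1) ^ 4 * (q + 1) ^ 2 * (q ^ 2 + 1) * (q ^ 2 + q + 1) := by
  have h_factor : ∀ i ∈ range 4, ((Fintype.card F ^ 4 - Fintype.card F ^ i : ℕ) : ℤ) =
      q ^ 4 - q ^ i := by
    intro i hi
    rw [Nat.cast_sub (Nat.pow_le_pow_right Fintype.card_pos (mem_range.1 hi).le), hq]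
    push_cast
    rfl
  rw [card_frames, Nat.cast_prod, prod_congr rfl h_factor]
  simp only [prod_range_succ, prod_range_zero]
  ring

theorem card_arcs_four_seven (hq : q = Fintype.card F) :
    (#(arcs F 4 (Fin 7) (Fin 4 → F)) : ℤ) = #(arcs F 4 (Fin 4) (Fin 4 → F)) * ((q - 1) ^ 6 *
      (q ^ 6 - 28 * q ^ 5 + 323 * q ^ 4 - 1952 * q ^ 3 + 6462 * q ^ 2 - 11004 * q + 7470
        - 30 * (if Even (Fintype.card F) then 1 else 0))) := by
  have h_pos : (#(arcs F 3 (Fin 3) (Fin 3 → F)) : ℤ) ≠ 0 := by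
    refine Nat.cast_ne_zero.2 (card_ne_zero.2 ⟨Pi.basisFun F (Fin 3), ?_⟩)
    rw [mem_arcs, isArc_iff_linearIndependent (by simp)]
    exact (Pi.basisFun F (Fin 3)).linearIndependent
  have h_gale := card_arcs_mul_card_frames (F := F) (ι := Fin 7) (k := 4) (m := 3) (by simp)
  apply mul_right_cancel₀ h_pos
  rw [← Nat.cast_mul, h_gale, Nat.cast_mul, card_arcs_seven (finrank_fin_fun F) hq]
  ring

end SevenArcs

/-- For every prime power `q`,
`C_{7,4}(q) = (q^2+q+1)(q^2+1)(q+1)^2 (q-1)^3 q^6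
  (q^6 - 28q^5 + 323q^4 - 1952q^3 + 6462q^2 - 11004q + 7470 - 30 a(q))`,
where `a(q) = 1` if `q` is even and `0` if `q` is odd. -/
theorem C74_formula (F : Type) [Field F] [Fintype F] (q : ℕ) (hq : q = Fintype.card F) :
    (Nat.card {σ : Fin 7 → ℙ F (Fin 4 → F) // IsArc4 F σ} : ℤ) =
      ((q : ℤ)^2 + q + 1) * ((q : ℤ)^2 + 1) * ((q : ℤ) + 1)^2 * ((q : ℤ) - 1)^3 * (q : ℤ)^6 *
        ((q : ℤ)^6 - 28 * (q : ℤ)^5 + 323 * (q : ℤ)^4 - 1952 * (q : ℤ)^3 + 6462 * (q : ℤ)^2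
          - 11004 * (q : ℤ) + 7470 - 30 * (if Even q then 1 else 0)) := by
  subst hq
  have h_proj := card_projective_arcs_mul (F := F) (V := Fin 4 → F) (ι := Fin 7) (k := 4)
    (by simp) (by simp)
  have h_scalars : ((Fintype.card F : ℤ) - 1) ^ 7 ≠ 0 :=
    pow_ne_zero 7 (sub_ne_zero.2 (by exact_mod_cast Fintype.one_lt_card.ne'))
  apply mul_right_cancel₀ h_scalars
  simp only [isArc4_iff_isArc (n := 7) (by simp)]
  calc
    _ = (#(arcs F 4 (Fin 7) (Fin 4 → F)) : ℤ) := by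
      rw [← h_proj]
      push_cast [Fintype.card_pos, Fintype.card_fin]
      rfl
    _ = _ := by
      rw [card_arcs_four_seven rfl, card_frames_four rfl]
      ring
end

section
/- For every prime power q, the number of injective maps σ from {0,1,2,3,4,5} to P^3(F_q) such that σ(0), σ(1), σ(2) are collinear, σ(3), σ(4), σ(5) are collinear, a triple of image points is collinear only when its index set is contained in {0,1,2} or {3,4,5}, and four image points σ(a), σ(b), σ(c), σ(d) are coplanar if and only if {a,b,c,d} is one of {0,1,2,3}, {0,1,2,4}, {0,1,2,5}, {0,3,4,5}, {1,3,4,5}, {2,3,4,5}, equals A_6(4,q) = (q^2 + q + 1)(q^2 + 1)(q + 1)^2 (q − 1)^2 · q^6. -/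
open scoped LinearAlgebra.Projectivization

/-- Three points of `ℙ³(F_q)` are collinear if vector representatives of them span a
subspace of `F_q^4` of dimension at most 2. -/
def Collinear3 (F : Type) [Field F] (x y z : ℙ F (Fin 4 → F)) : Prop :=
  Module.finrank F ↥(x.submodule ⊔ y.submodule ⊔ z.submodule) ≤ 2

/-!
Three distinct points of a line have representatives `a`, `b`, `a + b`, and the pair `(a, b)` is
unique up to a common scalar. Hence a pair of skew 3-point lines is represented by a basis
`(v₀, v₁, v₂, v₃)` through the six vectors `v₀, v₁, v₀ + v₁, v₂, v₃, v₂ + v₃`, and the bases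
representing a given realization form a single free orbit of `Fˣ × Fˣ`. The number of realizations
is therefore `|GL₄(F)| / (q - 1)²`.
-/

open Module

section Representatives

variable {ι K V : Type*} [DivisionRing K] [AddCommGroup V] [Module K V]

theorem linearIndepOn_rep_mk_iff {w : ι → V} (hw : ∀ i, w i ≠ 0) (s : Set ι) :
    LinearIndepOn K (fun i ↦ (Projectivization.mk K (w i) (hw i)).rep) s ↔
      LinearIndepOn K w s := by
  choose a ha using fun i ↦ Projectivization.exists_smul_eq_mk_rep K (w i) (hw i)
  simp only [← ha]
  exact LinearIndependent.units_smul_iff (fun i : s ↦ w i) fun i ↦ a i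

theorem linearIndepOn_rep_iff_card_le_finrank (σ : ι → ℙ K V) (s : Finset ι) :
    LinearIndepOn K (fun i ↦ (σ i).rep) s ↔ s.card ≤ finrank K ↥(⨆ i ∈ s, (σ i).submodule) := by
  have hspan : ⨆ i ∈ s, (σ i).submodule =
      Submodule.span K (Set.range fun i : s ↦ (σ i).rep) := by
    simp only [Submodule.span_range_eq_iSup, iSup_subtype, Projectivization.submodule_eq]
  rw [hspan, ← Fintype.card_coe s]
  exact linearIndependent_iff_card_le_finrank_span

theorem exists_ne_zero_sum_smul_eq_zero [DecidableEq ι] {w : ι → V} {s : Finset ι}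
    (hs : ¬LinearIndepOn K w s) (herase : ∀ i ∈ s, LinearIndepOn K w (s.erase i : Finset ι)) :
    ∃ c : ι → K, (∀ i ∈ s, c i ≠ 0) ∧ ∑ i ∈ s, c i • w i = 0 := by
  obtain ⟨c, hsum, j, hj, hcj⟩ := not_linearIndepOn_finset_iff.1 hs
  refine ⟨c, fun i hi hci ↦ hcj ?_, hsum⟩
  have hji : j ≠ i := fun h ↦ hcj (h ▸ hci)
  have herased : ∑ k ∈ s.erase i, c k • w k = 0 := by
    rwa [Finset.sum_erase _ (by rw [hci, zero_smul])]
  exact linearIndepOn_finset_iff.1 (herase i hi) c herased j (Finset.mem_erase.2 ⟨hji, hj⟩)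

theorem exists_units_smul_add_smul_eq_s9 [DecidableEq ι] {w : ι → V} {i j k : ι} (hij : i ≠ j)
    (hik : i ≠ k) (hjk : j ≠ k) (hs : ¬LinearIndepOn K w ({i, j, k} : Finset ι))
    (herase : ∀ l ∈ ({i, j, k} : Finset ι),
      LinearIndepOn K w (({i, j, k} : Finset ι).erase l : Finset ι)) :
    ∃ a b c : Kˣ, a • w i + b • w j = c • w k := by
  obtain ⟨c, hc, hsum⟩ := exists_ne_zero_sum_smul_eq_zero hs herase
  rw [Finset.sum_insert (by simp [hij, hik]), Finset.sum_pair hjk, ← add_assoc] at hsum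
  refine ⟨Units.mk0 (c i) (hc i (by simp)), Units.mk0 (c j) (hc j (by simp)),
    -Units.mk0 (c k) (hc k (by simp)), ?_⟩
  rw [Units.neg_smul]
  exact eq_neg_of_add_eq_zero_left hsum

theorem eq_of_smul_add_smul_eq {v : ι → V} (hv : LinearIndependent K v) {i j : ι} (hij : i ≠ j)
    {x y z : K} (h : x • v i + y • v j = z • (v i + v j)) : x = z ∧ y = z := by
  have hsub : (x - z) • v i + (y - z) • v j = 0 := by
    rw [sub_smul, sub_smul, sub_add_sub_comm, h, smul_add, sub_self]
  exact ((LinearIndepOn.pair_iff v hij).1 (hv.linearIndepOn _) _ _ hsub).imp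
    sub_eq_zero.1 sub_eq_zero.1

end Representatives

theorem card_eq_card_mul_card_of_free {G X Y : Type*} [Group G] [MulAction G X] {f : X → Y}
    (hf : Function.Surjective f) (horbit : ∀ x y, f x = f y ↔ x ∈ MulAction.orbit G y)
    (hfree : ∀ x : X, MulAction.stabilizer G x = ⊥) :
    Nat.card X = Nat.card Y * Nat.card G := by
  have e : Quotient (MulAction.orbitRel G X) ≃ Y :=
    (Quotient.congrRight fun x y ↦ (horbit x y).symm).trans
      (Setoid.quotientKerEquivOfSurjective f hf)
  rw [Nat.card_congr (MulAction.selfEquivOrbitsQuotientProd hfree), Nat.card_prod,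
    Nat.card_congr e]

section SkewTriples

variable {K V : Type*} [DivisionRing K] [AddCommGroup V] [Module K V]

/-- A pair of skew 3-point lines `{0, 1, 2}` and `{3, 4, 5}`, described by its matroid: a set of
points is independent exactly when it contains neither line. -/
def IsSkewTriples (σ : Fin 6 → ℙ K V) : Prop :=
  ∀ s : Finset (Fin 6),
    LinearIndepOn K (fun i ↦ (σ i).rep) s ↔ ¬{0, 1, 2} ⊆ s ∧ ¬{3, 4, 5} ⊆ s

/-- The six vectors that the quadruple `v` assigns to two 3-point lines. -/
def skewTripleVectors (v : Fin 4 → V) : Fin 6 → V :=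
  ![v 0, v 1, v 0 + v 1, v 2, v 3, v 2 + v 3]

theorem eq_zero_of_sum_smul_skewTripleVectors_eq_zero {v : Fin 4 → V}
    (hv : LinearIndependent K v) {g : Fin 6 → K} (hg : ∑ i, g i • skewTripleVectors v i = 0)
    (h₁ : g 0 = 0 ∨ g 1 = 0 ∨ g 2 = 0) (h₂ : g 3 = 0 ∨ g 4 = 0 ∨ g 5 = 0) (i : Fin 6) :
    g i = 0 := by
  have hsum : ∑ j, ![g 0 + g 2, g 1 + g 2, g 3 + g 5, g 4 + g 5] j • v j = 0 := by
    rw [← hg]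
    simp only [Fin.sum_univ_four, Fin.sum_univ_six, skewTripleVectors, Matrix.cons_val,
      add_smul, smul_add]
    abel
  have hcoeff := Fintype.linearIndependent_iff.1 hv _ hsum
  have h02 : g 0 + g 2 = 0 := hcoeff 0
  have h12 : g 1 + g 2 = 0 := hcoeff 1
  have h35 : g 3 + g 5 = 0 := hcoeff 2
  have h45 : g 4 + g 5 = 0 := hcoeff 3
  fin_cases i <;> grind

theorem not_linearIndepOn_skewTripleVectors (v : Fin 4 → V) :
    ¬LinearIndepOn K (skewTripleVectors v) ({0, 1, 2} : Finset (Fin 6)) ∧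
      ¬LinearIndepOn K (skewTripleVectors v) ({3, 4, 5} : Finset (Fin 6)) := by
  constructor <;> rw [not_linearIndepOn_finset_iff]
  · exact ⟨![1, 1, -1, 0, 0, 0], by simp [skewTripleVectors, ← add_assoc], 0, by simp⟩
  · exact ⟨![0, 0, 0, 1, 1, -1], by simp [skewTripleVectors, ← add_assoc], 3, by simp⟩

theorem linearIndepOn_skewTripleVectors_iff {v : Fin 4 → V} (hv : LinearIndependent K v)
    (s : Finset (Fin 6)) :
    LinearIndepOn K (skewTripleVectors v) s ↔ ¬{0, 1, 2} ⊆ s ∧ ¬{3, 4, 5} ⊆ s := by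
  refine ⟨fun h ↦ ⟨fun hs ↦ ?_, fun hs ↦ ?_⟩, fun ⟨h₁, h₂⟩ ↦ ?_⟩
  · exact (not_linearIndepOn_skewTripleVectors v).1 (h.mono (Finset.coe_subset.2 hs))
  · exact (not_linearIndepOn_skewTripleVectors v).2 (h.mono (Finset.coe_subset.2 hs))
  · rw [linearIndepOn_finset_iff]
    intro f hf
    have hsum : ∑ i, (if i ∈ s then f i else 0) • skewTripleVectors v i = 0 := by
      simpa [ite_smul] using hf
    rw [Finset.insert_subset_iff, Finset.insert_subset_iff, Finset.singleton_subset_iff] at h₁ h₂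
    have hzero := eq_zero_of_sum_smul_skewTripleVectors_eq_zero hv hsum (by grind) (by grind)
    exact fun i hi ↦ by simpa [hi] using hzero i

theorem skewTripleVectors_ne_zero {v : Fin 4 → V} (hv : LinearIndependent K v) (i : Fin 6) :
    skewTripleVectors v i ≠ 0 := by
  have hi : LinearIndepOn K (skewTripleVectors v) ({i} : Finset (Fin 6)) :=
    (linearIndepOn_skewTripleVectors_iff hv {i}).2 (by revert i; decide)
  exact (linearIndepOn_singleton_iff K).1 (by simpa using hi)

end SkewTriples

section Frames

variable {K V : Type*} [DivisionRing K] [AddCommGroup V] [Module K V]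

variable (K V) in
/-- The linearly independent quadruples, each of which represents a pair of skew 3-point lines
through `skewTripleVectors`. -/
def SkewFrame : Type _ := {v : Fin 4 → V // LinearIndependent K v}

namespace SkewFrame

/-- The points represented by a frame. -/
def points (v : SkewFrame K V) (i : Fin 6) : ℙ K V :=
  Projectivization.mk K (skewTripleVectors v.1 i) (skewTripleVectors_ne_zero v.2 i)

/-- The pairs of scalars act on frames by rescaling each of the two lines. -/
instance : MulAction (Kˣ × Kˣ) (SkewFrame K V) where
  smul a v := ⟨![a.1, a.1, a.2, a.2] • v.1, v.2.units_smul _⟩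
  one_smul v := Subtype.ext <| funext fun j ↦ by
    change ![(1 : Kˣ), 1, 1, 1] j • v.1 j = v.1 j
    fin_cases j <;> exact one_smul Kˣ _
  mul_smul a b v := Subtype.ext <| funext fun j ↦ by
    change ![a.1 * b.1, a.1 * b.1, a.2 * b.2, a.2 * b.2] j • v.1 j =
      ![a.1, a.1, a.2, a.2] j • ![b.1, b.1, b.2, b.2] j • v.1 j
    fin_cases j <;> exact mul_smul _ _ _

theorem coe_smul (a : Kˣ × Kˣ) (v : SkewFrame K V) :
    (a • v).1 = ![a.1, a.1, a.2, a.2] • v.1 := rfl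

theorem stabilizer_eq_bot (v : SkewFrame K V) : MulAction.stabilizer (Kˣ × Kˣ) v = ⊥ := by
  refine (Subgroup.eq_bot_iff_forall _).2 fun a ha ↦ ?_
  have hfix (j : Fin 4) : ![a.1, a.1, a.2, a.2] j • v.1 j = v.1 j :=
    congrFun (congrArg (fun w : SkewFrame K V ↦ w.1) (MulAction.mem_stabilizer_iff.1 ha)) j
  have hone (j : Fin 4) : ![a.1, a.1, a.2, a.2] j = 1 :=
    Units.ext <| smul_left_injective K (v.2.ne_zero j) <| (hfix j).trans (one_smul K _).symm
  exact Prod.ext (hone 0) (hone 2)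

theorem skewTripleVectors_smul (a : Kˣ × Kˣ) (v : SkewFrame K V) (i : Fin 6) :
    skewTripleVectors (a • v).1 i =
      ![a.1, a.1, a.1, a.2, a.2, a.2] i • skewTripleVectors v.1 i := by
  fin_cases i <;> simp [skewTripleVectors, coe_smul, smul_add]

theorem points_eq_points_iff (v w : SkewFrame K V) :
    v.points = w.points ↔ v ∈ MulAction.orbit (Kˣ × Kˣ) w := by
  simp only [funext_iff, points, Projectivization.mk_eq_mk_iff, MulAction.mem_orbit_iff]
  refine ⟨fun h ↦ ?_, ?_⟩
  · choose c hc using h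
    obtain ⟨h₀, h₁⟩ := eq_of_smul_add_smul_eq w.2 (show (0 : Fin 4) ≠ 1 by decide) <|
      show (c 0 : K) • w.1 0 + (c 1 : K) • w.1 1 = (c 2 : K) • (w.1 0 + w.1 1) from
        (congrArg₂ (· + ·) (hc 0) (hc 1)).trans (hc 2).symm
    obtain ⟨h₃, h₄⟩ := eq_of_smul_add_smul_eq w.2 (show (2 : Fin 4) ≠ 3 by decide) <|
      show (c 3 : K) • w.1 2 + (c 4 : K) • w.1 3 = (c 5 : K) • (w.1 2 + w.1 3) from
        (congrArg₂ (· + ·) (hc 3) (hc 4)).trans (hc 5).symm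
    refine ⟨(c 2, c 5), Subtype.ext <| funext fun j ↦ ?_⟩
    fin_cases j
    · exact (congrArg (· • w.1 0) (Units.ext h₀.symm)).trans (hc 0)
    · exact (congrArg (· • w.1 1) (Units.ext h₁.symm)).trans (hc 1)
    · exact (congrArg (· • w.1 2) (Units.ext h₃.symm)).trans (hc 3)
    · exact (congrArg (· • w.1 3) (Units.ext h₄.symm)).trans (hc 4)
  · rintro ⟨a, rfl⟩ i
    exact ⟨_, (skewTripleVectors_smul a w i).symm⟩

theorem isSkewTriples_points (v : SkewFrame K V) : IsSkewTriples v.points := fun s ↦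
  (linearIndepOn_rep_mk_iff (skewTripleVectors_ne_zero v.2) s).trans
    (linearIndepOn_skewTripleVectors_iff v.2 s)

end SkewFrame

theorem IsSkewTriples.exists_points_eq {σ : Fin 6 → ℙ K V} (hσ : IsSkewTriples σ) :
    ∃ v : SkewFrame K V, v.points = σ := by
  obtain ⟨a₀, a₁, a₂, ha⟩ := exists_units_smul_add_smul_eq_s9 (by decide) (by decide) (by decide)
    (mt (hσ {0, 1, 2}).1 (by decide)) fun l _ ↦ (hσ _).2 (by revert l; decide)
  obtain ⟨a₃, a₄, a₅, hb⟩ := exists_units_smul_add_smul_eq_s9 (by decide) (by decide) (by decide)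
    (mt (hσ {3, 4, 5}).1 (by decide)) fun l _ ↦ (hσ _).2 (by revert l; decide)
  let e : Fin 4 → Fin 6 := ![0, 1, 3, 4]
  have he : Function.Injective e := by decide
  have hrep : LinearIndependent K fun j ↦ (σ (e j)).rep := by
    have hindep := (hσ (Finset.univ.image e)).2 (by decide)
    rw [Finset.coe_image, Finset.coe_univ, Set.image_univ] at hindep
    exact (linearIndepOn_range_iff he fun i ↦ (σ i).rep).1 hindep
  let v : SkewFrame K V := ⟨_, hrep.units_smul ![a₀, a₁, a₃, a₄]⟩
  have hv (i : Fin 6) :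
      (![a₀, a₁, a₂, a₃, a₄, a₅] i : K) • (σ i).rep = skewTripleVectors v.1 i := by
    fin_cases i
    exacts [rfl, rfl, ha.symm, rfl, rfl, hb.symm]
  refine ⟨v, funext fun i ↦ ?_⟩
  rw [← (σ i).mk_rep]
  exact (Projectivization.mk_eq_mk_iff' ..).2 ⟨_, hv i⟩

end Frames

section Count

theorem card_isSkewTriples_mul {K V : Type*} [Field K] [Fintype K] [AddCommGroup V] [Module K V]
    [Finite V] (hV : 4 ≤ finrank K V) :
    Nat.card {σ : Fin 6 → ℙ K V // IsSkewTriples σ} * (Fintype.card K - 1) ^ 2 =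
      ∏ i : Fin 4, (Fintype.card K ^ finrank K V - Fintype.card K ^ (i : ℕ)) := by
  classical
  have := Fintype.ofFinite V
  let f (v : SkewFrame K V) : {σ : Fin 6 → ℙ K V // IsSkewTriples σ} :=
    ⟨v.points, v.isSkewTriples_points⟩
  have hf : Function.Surjective f := fun σ ↦ σ.2.exists_points_eq.imp fun v hv ↦ Subtype.ext hv
  have hcard := card_eq_card_mul_card_of_free (G := Kˣ × Kˣ) hf
    (fun v w ↦ Subtype.ext_iff.trans (v.points_eq_points_iff w)) SkewFrame.stabilizer_eq_bot
  rw [← card_linearIndependent hV, sq, ← Fintype.card_units, ← Nat.card_eq_fintype_card,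
    ← Nat.card_prod]
  exact hcard.symm

theorem natCast_prod_pow_sub_pow (R : Type*) [CommRing R] {q n k : ℕ} (hq : 0 < q) (hk : k ≤ n) :
    ((∏ i : Fin k, (q ^ n - q ^ (i : ℕ)) : ℕ) : R) =
      ∏ i : Fin k, ((q : R) ^ n - (q : R) ^ (i : ℕ)) := by
  rw [Nat.cast_prod]
  refine Finset.prod_congr rfl fun i _ ↦ ?_
  rw [Nat.cast_sub (Nat.pow_le_pow_right hq (i.is_le'.trans hk)), Nat.cast_pow, Nat.cast_pow]

end Count

section StrongRealizations

variable {F : Type} [Field F]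

theorem collinear3_iff_not_linearIndepOn {ι : Type*} [DecidableEq ι] (σ : ι → ℙ F (Fin 4 → F))
    {a b c : ι} (hab : a ≠ b) (hac : a ≠ c) (hbc : b ≠ c) :
    Collinear3 F (σ a) (σ b) (σ c) ↔
      ¬LinearIndepOn F (fun i ↦ (σ i).rep) ({a, b, c} : Finset ι) := by
  rw [linearIndepOn_rep_iff_card_le_finrank, Finset.card_eq_three.2 ⟨a, b, c, hab, hac, hbc, rfl⟩,
    not_le, Nat.lt_succ_iff, Finset.iSup_insert, Finset.iSup_insert, Finset.iSup_singleton,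
    ← sup_assoc, Collinear3]

theorem coplanar4_iff_not_linearIndepOn {ι : Type*} [DecidableEq ι] (σ : ι → ℙ F (Fin 4 → F))
    {a b c d : ι} (hab : a ≠ b) (hac : a ≠ c) (had : a ≠ d)
    (hbc : b ≠ c) (hbd : b ≠ d) (hcd : c ≠ d) :
    Coplanar4 F (σ a) (σ b) (σ c) (σ d) ↔
      ¬LinearIndepOn F (fun i ↦ (σ i).rep) ({a, b, c, d} : Finset ι) := by
  have hcard : ({a, b, c, d} : Finset ι).card = 4 := by simp [*]
  rw [linearIndepOn_rep_iff_card_le_finrank, hcard, not_le, Nat.lt_succ_iff,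
    Finset.iSup_insert, Finset.iSup_insert, Finset.iSup_insert, Finset.iSup_singleton,
    ← sup_assoc, ← sup_assoc, Coplanar4]

/-- The planes of the unique hyperfiguration on six points, as sets of point indices. -/
def hyperfigurationPlanes : Finset (Finset (Fin 6)) :=
  {{0, 1, 2, 3}, {0, 1, 2, 4}, {0, 1, 2, 5}, {0, 3, 4, 5}, {1, 3, 4, 5}, {2, 3, 4, 5}}

/-- The strong realizations of the unique hyperfiguration on six points. -/
def IsStrongRealization (σ : Fin 6 → ℙ F (Fin 4 → F)) : Prop :=
  Function.Injective σ ∧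
    Collinear3 F (σ 0) (σ 1) (σ 2) ∧
    Collinear3 F (σ 3) (σ 4) (σ 5) ∧
    (∀ a b c : Fin 6, a ≠ b → a ≠ c → b ≠ c →
      Collinear3 F (σ a) (σ b) (σ c) →
        ({a, b, c} : Finset (Fin 6)) ⊆ {0, 1, 2} ∨ ({a, b, c} : Finset (Fin 6)) ⊆ {3, 4, 5}) ∧
    (∀ a b c d : Fin 6, a ≠ b → a ≠ c → a ≠ d → b ≠ c → b ≠ d → c ≠ d →
      (Coplanar4 F (σ a) (σ b) (σ c) (σ d) ↔
        ({a, b, c, d} : Finset (Fin 6)) ∈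
          hyperfigurationPlanes))

theorem mem_hyperfigurationPlanes_iff {s : Finset (Fin 6)} (hs : s.card = 4) :
    s ∈ hyperfigurationPlanes ↔ {0, 1, 2} ⊆ s ∨ {3, 4, 5} ⊆ s := by
  revert s
  decide

theorem exists_quadruple_superset_of_not_subset {s : Finset (Fin 6)} (h₁ : ¬{0, 1, 2} ⊆ s)
    (h₂ : ¬{3, 4, 5} ⊆ s) :
    ∃ a b c d : Fin 6, a ≠ b ∧ a ≠ c ∧ a ≠ d ∧ b ≠ c ∧ b ≠ d ∧ c ≠ d ∧ s ⊆ {a, b, c, d} ∧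
      ¬{0, 1, 2} ⊆ ({a, b, c, d} : Finset (Fin 6)) ∧
      ¬{3, 4, 5} ⊆ ({a, b, c, d} : Finset (Fin 6)) := by
  revert s
  decide

theorem IsStrongRealization.isSkewTriples {σ : Fin 6 → ℙ F (Fin 4 → F)}
    (hσ : IsStrongRealization σ) : IsSkewTriples σ := by
  obtain ⟨-, h012, h345, -, hplane⟩ := hσ
  rw [collinear3_iff_not_linearIndepOn σ (by decide) (by decide) (by decide)] at h012 h345
  refine fun s ↦ ⟨fun h ↦ ⟨fun hs ↦ ?_, fun hs ↦ ?_⟩, fun ⟨h₁, h₂⟩ ↦ ?_⟩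
  · exact h012 (h.mono (Finset.coe_subset.2 hs))
  · exact h345 (h.mono (Finset.coe_subset.2 hs))
  · obtain ⟨a, b, c, d, hab, hac, had, hbc, hbd, hcd, hs, ht₁, ht₂⟩ :=
      exists_quadruple_superset_of_not_subset h₁ h₂
    have hcop := hplane a b c d hab hac had hbc hbd hcd
    rw [coplanar4_iff_not_linearIndepOn σ hab hac had hbc hbd hcd,
      mem_hyperfigurationPlanes_iff (by simp [*])] at hcop
    exact (not_not.1 (mt hcop.1 (not_or.2 ⟨ht₁, ht₂⟩))).mono (Finset.coe_subset.2 hs)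

theorem IsSkewTriples.isStrongRealization {σ : Fin 6 → ℙ F (Fin 4 → F)}
    (hσ : IsSkewTriples σ) : IsStrongRealization σ := by
  have hdep (s : Finset (Fin 6)) :
      ¬LinearIndepOn F (fun i ↦ (σ i).rep) s ↔ {0, 1, 2} ⊆ s ∨ {3, 4, 5} ⊆ s := by
    rw [hσ s]; tauto
  refine ⟨fun a b hab ↦ ?_, ?_, ?_, fun a b c hab hac hbc h ↦ ?_,
    fun a b c d hab hac had hbc hbd hcd ↦ ?_⟩
  · have hpair : LinearIndepOn F (fun i ↦ (σ i).rep) ({a, b} : Finset (Fin 6)) :=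
      (hσ _).2 (by clear hab; revert a b; decide)
    exact hpair.injOn (by simp) (by simp) (congrArg _ hab)
  · exact (collinear3_iff_not_linearIndepOn σ (by decide) (by decide) (by decide)).2
      ((hdep _).2 (by decide))
  · exact (collinear3_iff_not_linearIndepOn σ (by decide) (by decide) (by decide)).2
      ((hdep _).2 (by decide))
  · have hcard : ({a, b, c} : Finset (Fin 6)).card ≤ 3 := Finset.card_le_three
    rw [collinear3_iff_not_linearIndepOn σ hab hac hbc, hdep] at h
    exact h.imp (fun hs ↦ (Finset.eq_of_subset_of_card_le hs hcard).ge)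
      fun hs ↦ (Finset.eq_of_subset_of_card_le hs hcard).ge
  · rw [coplanar4_iff_not_linearIndepOn σ hab hac had hbc hbd hcd, hdep,
      mem_hyperfigurationPlanes_iff (by simp [*])]

theorem isStrongRealization_iff_isSkewTriples (σ : Fin 6 → ℙ F (Fin 4 → F)) :
    IsStrongRealization σ ↔ IsSkewTriples σ :=
  ⟨IsStrongRealization.isSkewTriples, IsSkewTriples.isStrongRealization⟩

end StrongRealizations

/-- `A_6(4,q)`: the number of strong realizations in `ℙ³(F_q)` of the unique
hyperfiguration on 6 points (two skew 3-point lines `{0,1,2}`, `{3,4,5}` and six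
4-point planes) equals `(q^2+q+1)(q^2+1)(q+1)^2(q-1)^2 q^6`. -/
theorem A6_formula (F : Type) [Field F] [Fintype F] (q : ℕ) (hq : q = Fintype.card F) :
    (Nat.card {σ : Fin 6 → ℙ F (Fin 4 → F) //
        Function.Injective σ ∧
        Collinear3 F (σ 0) (σ 1) (σ 2) ∧
        Collinear3 F (σ 3) (σ 4) (σ 5) ∧
        (∀ a b c : Fin 6, a ≠ b → a ≠ c → b ≠ c →
          Collinear3 F (σ a) (σ b) (σ c) →
            ({a, b, c} : Finset (Fin 6)) ⊆ {0, 1, 2} ∨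
              ({a, b, c} : Finset (Fin 6)) ⊆ {3, 4, 5}) ∧
        (∀ a b c d : Fin 6, a ≠ b → a ≠ c → a ≠ d → b ≠ c → b ≠ d → c ≠ d →
          (Coplanar4 F (σ a) (σ b) (σ c) (σ d) ↔
            ({a, b, c, d} : Finset (Fin 6)) ∈
              ({{0, 1, 2, 3}, {0, 1, 2, 4}, {0, 1, 2, 5}, {0, 3, 4, 5}, {1, 3, 4, 5},
                {2, 3, 4, 5}} : Finset (Finset (Fin 6)))))} : ℤ) =
      ((q : ℤ)^2 + q + 1) * ((q : ℤ)^2 + 1) * ((q : ℤ) + 1)^2 * ((q : ℤ) - 1)^2 * (q : ℤ)^6 := by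
  change ((Nat.card {σ : Fin 6 → ℙ F (Fin 4 → F) // IsStrongRealization σ} : ℕ) : ℤ) = _
  have hq1 : 1 < q := hq ▸ Fintype.one_lt_card
  have hq0 : (q : ℤ) - 1 ≠ 0 := by omega
  have hcount := card_isSkewTriples_mul (K := F) (V := Fin 4 → F) (by simp)
  rw [← hq, finrank_fin_fun] at hcount
  refine mul_right_cancel₀ (pow_ne_zero 2 hq0) ?_
  calc _ = ∏ i : Fin 4, ((q : ℤ) ^ 4 - (q : ℤ) ^ (i : ℕ)) := by
        rw [← natCast_prod_pow_sub_pow ℤ hq1.le le_rfl, ← hcount,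
          Nat.card_congr (Equiv.subtypeEquivRight isStrongRealization_iff_isSkewTriples)]
        push_cast [hq1.le]
        rfl
    _ = _ := by
        simp only [Fin.prod_univ_four, Fin.coe_ofNat_eq_mod]
        ring
end
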